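/- arXiv:2408.14981 — 3 statements merged into one kernel-verified Lean document; each statement's English description precedes it below -/
import Mathlib

section
/- Let π : (Z, U) → (Y, S) be a factor map of topological dynamical systems and f ∈ C(Z) a continuous real-valued function. Then the functional ψ_f : M_S(Y) → ℝ defined by ψ_f(ν) = min { ∫ f dλ : λ ∈ M_U(Z), π_* λ = ν } is lower semi-continuous and convex on M_S(Y) with the weak* topology. -/
open MeasureTheory Filter Topology
open scoped ENNReal NNReal

noncomputable section

/-- The set of `U`-invariant Borel probability measures. -/
def invMeas {Z : Type*} [MeasurableSpace Z] (U : Z → Z) : Set (ProbabilityMeasure Z) :=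
  {μ | μ.toMeasure.map U = μ.toMeasure}

/-- `ψ_f(ν) = min { ∫ f dλ : λ ∈ M_U(Z), π_* λ = ν }` (the minimum is attained, so it
equals the infimum). -/
def psi {Z Y : Type*} [MeasurableSpace Z] [MeasurableSpace Y]
    (U : Z → Z) (π : Z → Y) (f : Z → ℝ) (ν : ProbabilityMeasure Y) : ℝ :=
  sInf {r | ∃ lam ∈ invMeas U, lam.toMeasure.map π = ν.toMeasure ∧
    r = ∫ z, f z ∂lam.toMeasure}

/- By the Riesz extension and representation theorems every `ν` on `Y` lifts to a probability
measure on `Z`. When `ν` is invariant, its lifts form a closed set that the push-forward along `U`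
preserves, so a limit point of the Krylov–Bogolyubov averages of one lift is an invariant lift.
Hence `ψ_f` is a minimum over the fibers of the continuous map `π_*` on the compact set `M_U(Z)`,
which gives lower semicontinuity: its sublevel sets are images of compact sets. A convex combination
of minimizers over `ω₁` and `ω₂` is an invariant lift of the corresponding combination of `ω₁` and
`ω₂`, which gives convexity. -/

open scoped BoundedContinuousFunction CompactlySupported

section PositiveExtension

variable {E F : Type*} [AddCommGroup E] [PartialOrder E] [IsOrderedAddMonoid E] [Module ℝ E]
  [AddCommGroup F] [PartialOrder F] [IsOrderedAddMonoid F] [Module ℝ F] [PosSMulMono ℝ F]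

/- The Riesz extension theorem applies because `P` reflects positivity (so that `I` is well defined
and positive on the range of `P`) and its range is cofinal. -/
theorem exists_positiveLinearMap_comp_eq (I : E →ₚ[ℝ] ℝ) (P : E →ₗ[ℝ] F)
    (hP : ∀ x, 0 ≤ P x → 0 ≤ x) (hcofinal : ∀ y, ∃ x, y ≤ P x) :
    ∃ Λ : F →ₚ[ℝ] ℝ, ∀ x, Λ (P x) = I x := by
  have hinj : Function.Injective P := (injective_iff_map_eq_zero P).2 fun x hx ↦
    le_antisymm (neg_nonneg.1 (hP (-x) (by simp [hx]))) (hP x hx.ge)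
  let e := LinearEquiv.ofInjective P hinj
  have hdense (y : F) : ∃ x : LinearMap.range P, (x : F) + y ∈ PointedCone.positive ℝ F := by
    obtain ⟨x, hx⟩ := hcofinal (-y)
    exact ⟨e x, neg_le_iff_add_nonneg.1 hx⟩
  obtain ⟨Λ, hΛ, hΛ_nonneg⟩ := riesz_extension (PointedCone.positive ℝ F)
    ⟨LinearMap.range P, I.toLinearMap ∘ₗ e.symm.toLinearMap⟩
    (fun x hx ↦ map_nonneg I (hP _ (hx.trans_eq (LinearEquiv.ofInjective_symm_apply P x).symm)))
    hdense
  refine ⟨.mk₀ Λ hΛ_nonneg, fun x ↦ (hΛ (e x)).trans ?_⟩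
  exact congrArg I (e.symm_apply_apply x)

end PositiveExtension

section PushforwardSurjective

variable {Z Y : Type*} [TopologicalSpace Z] [CompactSpace Z] [T2Space Z] [MeasurableSpace Z]
  [BorelSpace Z] [TopologicalSpace Y] [HasOuterApproxClosed Y] [MeasurableSpace Y] [BorelSpace Y]

theorem exists_probabilityMeasure_map_eq {π : Z → Y} (hπ : Continuous π)
    (hsurj : Function.Surjective π) (ν : ProbabilityMeasure Y) :
    ∃ lam : ProbabilityMeasure Z, lam.toMeasure.map π = ν.toMeasure := by
  let I : (Y →ᵇ ℝ) →ₚ[ℝ] ℝ :=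
    { toFun h := ∫ y, h y ∂ν.toMeasure
      map_add' h h' := integral_add (h.integrable _) (h'.integrable _)
      map_smul' c h := integral_smul c h
      monotone' h h' hle := integral_mono (h.integrable _) (h'.integrable _) hle }
  let P : (Y →ᵇ ℝ) →ₗ[ℝ] C_c(Z, ℝ) :=
    { toFun h := ⟨⟨h ∘ π, h.continuous.comp hπ⟩, HasCompactSupport.of_compactSpace _⟩
      map_add' _ _ := rfl
      map_smul' _ _ := rfl }
  have : PosSMulMono ℝ C_c(Z, ℝ) :=
    ⟨fun _ hc _ _ hle z ↦ mul_le_mul_of_nonneg_left (hle z) hc⟩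
  obtain ⟨Λ, hΛ⟩ := exists_positiveLinearMap_comp_eq I P (fun h hh ↦ hsurj.forall.2 hh) fun g ↦
    ⟨.const Y ‖g.toBoundedContinuousFunction‖,
      fun z ↦ (le_abs_self _).trans (g.toBoundedContinuousFunction.norm_coe_le_norm z)⟩
  have hmap : (RealRMK.rieszMeasure Λ).map π = ν.toMeasure :=
    ext_of_forall_integral_eq_of_IsFiniteMeasure fun h ↦ by
      rw [integral_map hπ.aemeasurable h.continuous.aestronglyMeasurable]
      exact (RealRMK.integral_rieszMeasure Λ (P h)).trans (hΛ h)
  have : IsProbabilityMeasure ((RealRMK.rieszMeasure Λ).map π) := hmap ▸ ν.2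
  exact ⟨⟨RealRMK.rieszMeasure Λ, Measure.isProbabilityMeasure_of_map π⟩, hmap⟩

end PushforwardSurjective

section OrbitAverage

lemma birkhoffAverage_of_forall_iterate_eq (R : Type*) {α M : Type*} [DivisionSemiring R]
    [CharZero R] [AddCommMonoid M] [Module R M] {f : α → α} {g : α → M} {x : α} {c : M}
    (h : ∀ k, g (f^[k] x) = c) {n : ℕ} (hn : n ≠ 0) : birkhoffAverage R f g n x = c := by
  have hn' : (n : R) ≠ 0 := Nat.cast_ne_zero.2 hn
  simp only [birkhoffAverage, birkhoffSum, h, Finset.sum_const, Finset.card_range,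
    ← Nat.cast_smul_eq_nsmul R, inv_smul_smul₀ hn']

variable {X Y : Type*} [MeasurableSpace X] [MeasurableSpace Y]

/-- The Cesàro average of the measures `μ, F μ, …, F^[n] μ`. The averages run over `n + 1` terms
so that they are probability measures for every `n`. -/
def orbitAverage (F : ProbabilityMeasure X → ProbabilityMeasure X) (μ : ProbabilityMeasure X)
    (n : ℕ) : ProbabilityMeasure X :=
  ⟨birkhoffAverage ℝ≥0 F ProbabilityMeasure.toMeasure (n + 1) μ, ⟨by
    have hsum := birkhoffAverage_of_forall_iterate_eq ℝ≥0
      (g := fun μ' : ProbabilityMeasure X ↦ μ'.toMeasure Set.univ) (f := F) (x := μ)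
      (fun _ ↦ measure_univ) n.succ_ne_zero
    simpa only [birkhoffAverage, birkhoffSum, Measure.smul_apply, Measure.finsetSum_apply]
      using hsum⟩⟩

lemma integral_orbitAverage [TopologicalSpace X] [OpensMeasurableSpace X]
    (F : ProbabilityMeasure X → ProbabilityMeasure X) (μ : ProbabilityMeasure X) (n : ℕ)
    (g : X →ᵇ ℝ) :
    ∫ x, g x ∂(orbitAverage F μ n).toMeasure =
      birkhoffAverage ℝ F (fun μ' ↦ ∫ x, g x ∂μ'.toMeasure) (n + 1) μ := by
  simp only [orbitAverage, ProbabilityMeasure.coe_mk, birkhoffAverage, birkhoffSum]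
  rw [integral_smul_nnreal_measure, integral_finsetSum_measure fun k _ ↦ g.integrable _]
  simp [NNReal.smul_def]

lemma map_orbitAverage_of_forall_iterate {F : ProbabilityMeasure X → ProbabilityMeasure X}
    {μ : ProbabilityMeasure X} {π : X → Y} (hπ : Measurable π) {ν : Measure Y}
    (h : ∀ k, (F^[k] μ).toMeasure.map π = ν) (n : ℕ) :
    (orbitAverage F μ n).toMeasure.map π = ν := by
  rw [← Measure.mapₗ_apply_of_measurable hπ, orbitAverage, ProbabilityMeasure.coe_mk,
    map_birkhoffAverage ℝ≥0 ℝ≥0]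
  exact birkhoffAverage_of_forall_iterate_eq ℝ≥0
    (g := Measure.mapₗ π ∘ ProbabilityMeasure.toMeasure)
    (fun k ↦ (Measure.mapₗ_apply_of_measurable hπ _).trans (h k)) n.succ_ne_zero

end OrbitAverage

section KrylovBogolyubov

variable {Z : Type*} [TopologicalSpace Z] [MeasurableSpace Z] [BorelSpace Z]

lemma tendsto_integral_comp_sub_integral_orbitAverage {U : Z → Z} (hU : Continuous U)
    (μ : ProbabilityMeasure Z) (g : Z →ᵇ ℝ) :
    Tendsto (fun n ↦ ∫ z, g (U z) ∂(orbitAverage (·.map hU.aemeasurable) μ n).toMeasure -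
      ∫ z, g z ∂(orbitAverage (·.map hU.aemeasurable) μ n).toMeasure) atTop (𝓝 0) := by
  have hcomp (n : ℕ) : ∫ z, g (U z) ∂(orbitAverage (·.map hU.aemeasurable) μ n).toMeasure =
      birkhoffAverage ℝ (·.map hU.aemeasurable) (fun μ' ↦ ∫ z, g z ∂μ'.toMeasure) (n + 1)
        (μ.map hU.aemeasurable) := by
    have hiter (k : ℕ) : ∫ z, g (U z) ∂((·.map hU.aemeasurable)^[k] μ).toMeasure =
        ∫ z, g z ∂((·.map hU.aemeasurable)^[k] (μ.map hU.aemeasurable)).toMeasure := by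
      rw [← Function.iterate_succ_apply, Function.iterate_succ_apply']
      exact (integral_map hU.aemeasurable g.continuous.aestronglyMeasurable).symm
    refine (integral_orbitAverage _ μ n (g.compContinuous ⟨U, hU⟩)).trans ?_
    exact congrArg _ (Finset.sum_congr rfl fun k _ ↦ hiter k)
  simp only [hcomp, integral_orbitAverage]
  exact (tendsto_birkhoffAverage_apply_sub_birkhoffAverage' ℝ
    (g.isBounded_range_integral fun μ' : ProbabilityMeasure Z ↦ μ'.toMeasure) _ μ).comp
    (tendsto_add_atTop_nat 1)

variable [HasOuterApproxClosed Z]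

lemma mem_invMeas_of_tendsto {ι : Type*} {l : Filter ι} [l.NeBot] {U : Z → Z} (hU : Continuous U)
    {μs : ι → ProbabilityMeasure Z} {μ : ProbabilityMeasure Z} (hμ : Tendsto μs l (𝓝 μ))
    (hasymp : ∀ g : Z →ᵇ ℝ, Tendsto
      (fun i ↦ ∫ z, g (U z) ∂(μs i).toMeasure - ∫ z, g z ∂(μs i).toMeasure) l (𝓝 0)) :
    μ ∈ invMeas U := by
  have : IsProbabilityMeasure (μ.toMeasure.map U) :=
    Measure.isProbabilityMeasure_map hU.aemeasurable
  refine ext_of_forall_integral_eq_of_IsFiniteMeasure fun g ↦ ?_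
  rw [integral_map hU.aemeasurable g.continuous.aestronglyMeasurable]
  have hlim := ProbabilityMeasure.tendsto_iff_forall_integral_tendsto.1 hμ
  exact sub_eq_zero.1 <| tendsto_nhds_unique
    ((hlim (g.compContinuous ⟨U, hU⟩)).sub (hlim g)) (hasymp g)

lemma isClosed_invMeas {U : Z → Z} (hU : Continuous U) : IsClosed (invMeas U) := by
  have hfix : invMeas U = {μ | μ.map hU.aemeasurable = μ} :=
    Set.ext fun μ ↦ ProbabilityMeasure.toMeasure_injective.eq_iff (a := μ.map hU.aemeasurable)
  exact hfix ▸ isClosed_eq (ProbabilityMeasure.continuous_map hU) continuous_id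

theorem exists_mem_invMeas_of_forall_orbitAverage_mem [CompactSpace Z] [T2Space Z] {U : Z → Z}
    (hU : Continuous U) {K : Set (ProbabilityMeasure Z)} (hK : IsClosed K)
    {μ : ProbabilityMeasure Z} (hμ : ∀ n, orbitAverage (·.map hU.aemeasurable) μ n ∈ K) :
    ∃ lam ∈ invMeas U, lam ∈ K := by
  let l : Ultrafilter (ProbabilityMeasure Z) :=
    (hyperfilter ℕ).map (orbitAverage (·.map hU.aemeasurable) μ)
  have hlim : Tendsto (orbitAverage (·.map hU.aemeasurable) μ) (hyperfilter ℕ) (𝓝 l.lim) :=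
    l.le_nhds_lim
  exact ⟨l.lim,
    mem_invMeas_of_tendsto hU hlim fun g ↦
      (tendsto_integral_comp_sub_integral_orbitAverage hU μ g).mono_left Nat.hyperfilter_le_atTop,
    hK.mem_of_tendsto hlim (.of_forall hμ)⟩

end KrylovBogolyubov

section FiberwiseInfimum

variable {X Y γ : Type*} [TopologicalSpace X] [ConditionallyCompleteLinearOrder γ]

lemma isLeast_sInf_image_of_isCompact {s : Set X} (hs : IsCompact s) (hne : s.Nonempty)
    {φ : X → γ} (hφ : LowerSemicontinuousOn φ s) : IsLeast (φ '' s) (sInf (φ '' s)) := by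
  obtain ⟨x, hx, hmin⟩ := hφ.exists_isMinOn hne hs
  have hleast : IsLeast (φ '' s) (φ x) := ⟨Set.mem_image_of_mem φ hx, Set.forall_mem_image.2 hmin⟩
  rwa [hleast.csInf_eq]

theorem lowerSemicontinuousOn_sInf_image_fiber [TopologicalSpace Y] [T2Space Y] {K : Set X}
    (hK : IsCompact K) {p : X → Y} (hp : ContinuousOn p K) {φ : X → γ}
    (hφ : LowerSemicontinuousOn φ K) :
    LowerSemicontinuousOn (fun y ↦ sInf (φ '' (K ∩ p ⁻¹' {y}))) (p '' K) := by
  have hfiber (y : Y) : IsCompact (K ∩ p ⁻¹' {y}) := by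
    obtain ⟨t, ht, hKt⟩ := continuousOn_iff_isClosed.1 hp {y} isClosed_singleton
    rw [Set.inter_comm, hKt]
    exact hK.inter_left ht
  have hleast {y : Y} (hy : y ∈ p '' K) :
      IsLeast (φ '' (K ∩ p ⁻¹' {y})) (sInf (φ '' (K ∩ p ⁻¹' {y}))) :=
    isLeast_sInf_image_of_isCompact (hfiber y) hy (hφ.mono Set.inter_subset_left)
  refine lowerSemicontinuousOn_iff_preimage_Iic.2 fun c ↦
    ⟨p '' (K ∩ φ ⁻¹' Set.Iic c), ?_, ?_⟩
  · exact ((hφ.isCompact_inter_preimage_Iic hK c).image_of_continuousOn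
      (hp.mono Set.inter_subset_left)).isClosed
  · ext y
    refine and_congr_right fun hy ↦ ⟨fun hle ↦ ?_, ?_⟩
    · obtain ⟨x, ⟨hxK, hxy⟩, hval⟩ := (hleast hy).1
      exact ⟨x, ⟨hxK, hval.trans_le hle⟩, hxy⟩
    · rintro ⟨x, ⟨hxK, hxc⟩, hxy⟩
      exact ((hleast hy).2 ⟨x, ⟨hxK, hxy⟩, rfl⟩).trans hxc

end FiberwiseInfimum

section Psi

lemma map_nnreal_smul_add_smul {α β : Type*} [MeasurableSpace α] [MeasurableSpace β] {q : α → β}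
    (hq : Measurable q) (a b : ℝ≥0) (μ₁ μ₂ : Measure α) :
    (a • μ₁ + b • μ₂).map q = a • μ₁.map q + b • μ₂.map q := by
  rw [Measure.map_add _ _ hq, Measure.map_smul, Measure.map_smul]

variable {Z Y : Type*} [MeasurableSpace Z] [MeasurableSpace Y]

/-- The fiber `{λ ∈ M_U(Z) : π_* λ = ν}` over which `psi U π f ν` is the infimum. -/
def invLifts (U : Z → Z) (π : Z → Y) (ν : ProbabilityMeasure Y) : Set (ProbabilityMeasure Z) :=
  {lam ∈ invMeas U | lam.toMeasure.map π = ν.toMeasure}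

lemma psi_eq_sInf_image (U : Z → Z) (π : Z → Y) (f : Z → ℝ) (ν : ProbabilityMeasure Y) :
    psi U π f ν = sInf ((fun lam ↦ ∫ z, f z ∂lam.toMeasure) '' invLifts U π ν) := by
  simp only [psi, invLifts, Set.image, Set.mem_ofPred_eq, and_assoc, eq_comm]

lemma invLifts_eq_inter_preimage (U : Z → Z) {π : Z → Y} (hπ : Measurable π)
    (ν : ProbabilityMeasure Y) :
    invLifts U π ν = invMeas U ∩ (fun lam ↦ lam.map hπ.aemeasurable) ⁻¹' {ν} :=
  Set.ext fun lam ↦ and_congr_right fun _ ↦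
    ProbabilityMeasure.toMeasure_injective.eq_iff (a := lam.map hπ.aemeasurable)

lemma exists_mem_invLifts_eq_smul_add_smul {U : Z → Z} (hU : Measurable U) {π : Z → Y}
    (hπ : Measurable π) {a b : ℝ≥0} {ω₁ ω₂ ω : ProbabilityMeasure Y}
    (hω : ω.toMeasure = a • ω₁.toMeasure + b • ω₂.toMeasure) {lam₁ lam₂ : ProbabilityMeasure Z}
    (h₁ : lam₁ ∈ invLifts U π ω₁) (h₂ : lam₂ ∈ invLifts U π ω₂) :
    ∃ lam ∈ invLifts U π ω, lam.toMeasure = a • lam₁.toMeasure + b • lam₂.toMeasure := by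
  have hlift : (a • lam₁.toMeasure + b • lam₂.toMeasure).map π = ω.toMeasure := by
    rw [map_nnreal_smul_add_smul hπ, h₁.2, h₂.2, hω]
  have : IsProbabilityMeasure ((a • lam₁.toMeasure + b • lam₂.toMeasure).map π) :=
    hlift ▸ inferInstance
  refine ⟨⟨_, Measure.isProbabilityMeasure_of_map π⟩, ⟨?_, hlift⟩, rfl⟩
  exact (map_nnreal_smul_add_smul hU a b _ _).trans (by rw [h₁.1, h₂.1]; rfl)

variable [TopologicalSpace Z] [BorelSpace Z] [TopologicalSpace Y] [HasOuterApproxClosed Y]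
  [BorelSpace Y] [CompactSpace Z] [T2Space Z] [HasOuterApproxClosed Z]
  {U : Z → Z} {S : Y → Y} {π : Z → Y} {f : Z → ℝ}

theorem invLifts_nonempty (hU : Continuous U) (hS : Measurable S) (hπ : Continuous π)
    (hsurj : Function.Surjective π) (hfactor : Function.Semiconj π U S) {ν : ProbabilityMeasure Y}
    (hν : ν ∈ invMeas S) : (invLifts U π ν).Nonempty := by
  obtain ⟨μ, hμ⟩ := exists_probabilityMeasure_map_eq hπ hsurj ν
  have hstep : Set.MapsTo (·.map hU.aemeasurable)
      {lam : ProbabilityMeasure Z | lam.toMeasure.map π = ν.toMeasure}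
      {lam | lam.toMeasure.map π = ν.toMeasure} := fun lam hlam ↦ calc
    (lam.toMeasure.map U).map π = (lam.toMeasure.map π).map S := by
      rw [Measure.map_map hπ.measurable hU.measurable, Measure.map_map hS hπ.measurable,
        hfactor.comp_eq]
    _ = ν.toMeasure := by rw [hlam, hν]
  have hclosed : IsClosed {lam : ProbabilityMeasure Z | lam.map hπ.aemeasurable = ν} :=
    isClosed_eq (ProbabilityMeasure.continuous_map hπ) continuous_const
  obtain ⟨lam, hlam, hlift⟩ := exists_mem_invMeas_of_forall_orbitAverage_mem hU hclosed fun n ↦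
    ProbabilityMeasure.toMeasure_injective <|
      map_orbitAverage_of_forall_iterate hπ.measurable (fun k ↦ hstep.iterate k hμ) n
  exact ⟨lam, hlam, congrArg ProbabilityMeasure.toMeasure hlift⟩

lemma isLeast_psi (hU : Continuous U) (hπ : Continuous π) (hf : Continuous f)
    {ν : ProbabilityMeasure Y} (hν : (invLifts U π ν).Nonempty) :
    IsLeast ((fun lam ↦ ∫ z, f z ∂lam.toMeasure) '' invLifts U π ν) (psi U π f ν) := by
  have hclosed : IsClosed (invLifts U π ν) := invLifts_eq_inter_preimage U hπ.measurable ν ▸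
    (isClosed_invMeas hU).inter
      (isClosed_singleton.preimage (ProbabilityMeasure.continuous_map hπ))
  rw [psi_eq_sInf_image]
  exact isLeast_sInf_image_of_isCompact hclosed.isCompact hν
    ((ProbabilityMeasure.continuous_integral_continuousMap
      (⟨f, hf⟩ : C(Z, ℝ))).lowerSemicontinuous.lowerSemicontinuousOn _)

theorem lowerSemicontinuousOn_psi (hU : Continuous U) (hπ : Continuous π) (hf : Continuous f) :
    LowerSemicontinuousOn (psi U π f) {ν | (invLifts U π ν).Nonempty} := by
  have hlsc := lowerSemicontinuousOn_sInf_image_fiber (isClosed_invMeas hU).isCompact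
    (ProbabilityMeasure.continuous_map hπ).continuousOn
    ((ProbabilityMeasure.continuous_integral_continuousMap
      (⟨f, hf⟩ : C(Z, ℝ))).lowerSemicontinuous.lowerSemicontinuousOn _)
  simp only [ContinuousMap.coe_mk, ← invLifts_eq_inter_preimage U hπ.measurable,
    ← psi_eq_sInf_image] at hlsc
  refine hlsc.mono fun ν hν ↦ ?_
  rwa [Set.mem_ofPred_eq, invLifts_eq_inter_preimage U hπ.measurable] at hν

theorem psi_smul_add_smul_le (hU : Continuous U) (hπ : Continuous π) (hf : Continuous f)
    {a b : ℝ≥0} {ω₁ ω₂ ω : ProbabilityMeasure Y}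
    (hω : ω.toMeasure = a • ω₁.toMeasure + b • ω₂.toMeasure)
    (h₁ : (invLifts U π ω₁).Nonempty) (h₂ : (invLifts U π ω₂).Nonempty) :
    psi U π f ω ≤ a * psi U π f ω₁ + b * psi U π f ω₂ := by
  obtain ⟨lam₁, hlam₁, hmin₁⟩ := (isLeast_psi hU hπ hf h₁).1
  obtain ⟨lam₂, hlam₂, hmin₂⟩ := (isLeast_psi hU hπ hf h₂).1
  obtain ⟨lam, hlam, hcomb⟩ :=
    exists_mem_invLifts_eq_smul_add_smul hU.measurable hπ.measurable hω hlam₁ hlam₂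
  have hint (μ : Measure Z) [IsFiniteMeasure μ] : Integrable f μ :=
    hf.integrable_of_hasCompactSupport (.of_compactSpace f)
  calc psi U π f ω ≤ ∫ z, f z ∂lam.toMeasure :=
        (isLeast_psi hU hπ hf ⟨lam, hlam⟩).2 (Set.mem_image_of_mem _ hlam)
    _ = a * ∫ z, f z ∂lam₁.toMeasure + b * ∫ z, f z ∂lam₂.toMeasure := by
        rw [hcomb, integral_add_measure (hint _) (hint _), integral_smul_nnreal_measure,
          integral_smul_nnreal_measure]
        rfl
    _ = a * psi U π f ω₁ + b * psi U π f ω₂ := by rw [← hmin₁, ← hmin₂]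

end Psi

theorem stmt1_general {Z Y : Type*} [TopologicalSpace Z] [CompactSpace Z] [T2Space Z]
    [HasOuterApproxClosed Z] [MeasurableSpace Z] [BorelSpace Z] [TopologicalSpace Y]
    [HasOuterApproxClosed Y] [MeasurableSpace Y] [BorelSpace Y] {U : Z → Z} (hU : Continuous U)
    {S : Y → Y} (hS : Measurable S) {π : Z → Y} (hπ : Continuous π)
    (hsurj : Function.Surjective π) (hfactor : Function.Semiconj π U S) {f : Z → ℝ}
    (hf : Continuous f) :
    LowerSemicontinuousOn (psi U π f) (invMeas S) ∧
    (∀ ω₁ ∈ invMeas S, ∀ ω₂ ∈ invMeas S, ∀ t : ℝ≥0, t ≤ 1 →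
      ∀ ω : ProbabilityMeasure Y,
        ω.toMeasure = (t : ℝ≥0∞) • ω₁.toMeasure + (1 - (t : ℝ≥0∞)) • ω₂.toMeasure →
        psi U π f ω ≤ (t : ℝ) * psi U π f ω₁ + (1 - (t : ℝ)) * psi U π f ω₂) := by
  have hlift {ν : ProbabilityMeasure Y} (hν : ν ∈ invMeas S) : (invLifts U π ν).Nonempty :=
    invLifts_nonempty hU hS hπ hsurj hfactor hν
  refine ⟨(lowerSemicontinuousOn_psi hU hπ hf).mono fun _ ↦ hlift,
    fun ω₁ hω₁ ω₂ hω₂ t ht ω hω ↦ ?_⟩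
  have hω' : ω.toMeasure = t • ω₁.toMeasure + (1 - t) • ω₂.toMeasure := by
    rw [hω, ← ENNReal.coe_one, ← ENNReal.coe_sub]
    rfl
  have hconv := psi_smul_add_smul_le hU hπ hf hω' (hlift hω₁) (hlift hω₂)
  rwa [NNReal.coe_sub ht, NNReal.coe_one] at hconv

/-- for a factor map `π : (Z,U) → (Y,S)` and `f ∈ C(Z)`, the functional
`ψ_f : M_S(Y) → ℝ` is lower semicontinuous and convex on `M_S(Y)` (weak* topology). -/
theorem stmt1
    {Z Y : Type*}
    [TopologicalSpace Z] [CompactSpace Z] [TopologicalSpace.MetrizableSpace Z]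
    [MeasurableSpace Z] [BorelSpace Z]
    [TopologicalSpace Y] [CompactSpace Y] [TopologicalSpace.MetrizableSpace Y]
    [MeasurableSpace Y] [BorelSpace Y]
    (U : Z ≃ₜ Z) (S : Y ≃ₜ Y) (π : Z → Y)
    (hπcont : Continuous π) (hπsurj : Function.Surjective π)
    (hfactor : ⇑S ∘ π = π ∘ ⇑U)
    (f : Z → ℝ) (hf : Continuous f) :
    -- lower semicontinuity on `M_S(Y)`
    LowerSemicontinuousOn (psi (⇑U) π f) (invMeas ⇑S) ∧
    -- convexity on `M_S(Y)`
    (∀ ω₁ ∈ invMeas ⇑S, ∀ ω₂ ∈ invMeas ⇑S, ∀ t : ℝ≥0, t ≤ 1 →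
      ∀ ω : ProbabilityMeasure Y,
        ω.toMeasure = (t : ℝ≥0∞) • ω₁.toMeasure + (1 - (t : ℝ≥0∞)) • ω₂.toMeasure →
        psi (⇑U) π f ω ≤ (t : ℝ) * psi (⇑U) π f ω₁ + (1 - (t : ℝ)) * psi (⇑U) π f ω₂) :=
  stmt1_general U.continuous S.measurable hπcont hπsurj (fun z ↦ (congrFun hfactor z).symm) hf
end
end

section
/- Let π : (Z, U) → (Y, S) be a factor map of topological dynamical systems and f ∈ C(Z). Then α(f) ≤ β(f). -/
open MeasureTheory Filter Topology
open scoped ENNReal NNReal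

noncomputable section

/-- Birkhoff average of `f` along the orbit of `z` under `U`, over times `0, …, k-1`. -/
def birk {Z : Type*} (U : Z → Z) (f : Z → ℝ) (k : ℕ) (z : Z) : ℝ :=
  (k : ℝ)⁻¹ * ∑ j ∈ Finset.range k, f (U^[j] z)

/-- `α(f) = sup_{ν ∈ M_S(Y)} ψ_f(ν)`. -/
def alphaF {Z Y : Type*} [MeasurableSpace Z] [MeasurableSpace Y]
    (U : Z → Z) (S : Y → Y) (π : Z → Y) (f : Z → ℝ) : ℝ :=
  sSup {r | ∃ ν ∈ invMeas S, r = psi U π f ν}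

/-- `R_f`: points whose Birkhoff averages converge. -/
def regPts {Z : Type*} (U : Z → Z) (f : Z → ℝ) : Set Z :=
  {z | ∃ L : ℝ, Tendsto (fun k : ℕ => birk U f k z) atTop (𝓝 L)}

/-- `β(f) = sup_{y ∈ π(R_f)} inf_{z ∈ R_f ∩ π⁻¹{y}} lim_k A_k f(z)`. -/
def betaF {Z Y : Type*} (U : Z → Z) (π : Z → Y) (f : Z → ℝ) : ℝ :=
  sSup {r | ∃ y ∈ π '' regPts U f,
    r = sInf {L | ∃ z ∈ regPts U f, π z = y ∧
      Tendsto (fun k : ℕ => birk U f k z) atTop (𝓝 L)}}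

/-!
Fix `ν ∈ M_S(Y)` and let `N h` be the limit of `∫ max_{π z = y} A_k h(z) dν(y)` as `k → ∞`, which
exists by Fekete's lemma since the fibrewise maxima of the Birkhoff sums form a subadditive
cocycle over `S`. The functional `N` is sublinear on `C(Z)`, nonpositive on coboundaries and equal
to integration against `ν` on functions pulled back from `Y`. Hahn-Banach and the Riesz
representation theorem therefore give an invariant lift `λ` of `ν` with `∫ (-f) dλ = N (-f)`.

By Birkhoff's theorem `λ`-almost every `z` is regular for `f`, so the fibre through `z` contains
points at which `A_k f` converges to limits arbitrarily close to or below `β(f)`. Hence the maximum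
of `A_k (-f)` over that fibre is eventually larger than any number below `-β(f)`, and integrating
gives `N (-f) ≥ -β(f)`. Thus `ψ_f(ν) ≤ ∫ f dλ = -N (-f) ≤ β(f)`.
-/

section Integral

variable {X : Type*} [MeasurableSpace X] {μ : Measure X}

lemma integral_comp_of_measurePreserving {Y : Type*} [MeasurableSpace Y] {ν : Measure Y}
    {φ : X → Y} (hφ : MeasurePreserving φ μ ν) {h : Y → ℝ} (hh : AEStronglyMeasurable h ν) :
    ∫ x, h (φ x) ∂μ = ∫ y, h y ∂ν := by
  rw [← hφ.map_eq] at hh ⊢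
  exact (integral_map hφ.measurable.aemeasurable hh).symm

lemma abs_integral_le [IsProbabilityMeasure μ] {g : X → ℝ} {C : ℝ} (hC : ∀ x, |g x| ≤ C) :
    |∫ x, g x ∂μ| ≤ C := by
  simpa only [probReal_univ, mul_one, Real.norm_eq_abs] using
    norm_integral_le_of_norm_le_const (f := g) (μ := μ) (ae_of_all _ hC)

lemma le_of_tendsto_integral_of_ae_eventually_lt [IsProbabilityMeasure μ] {φ : ℕ → X → ℝ}
    {b c L : ℝ} (hφ : ∀ n, Integrable (φ n) μ) (hb : ∀ n x, b ≤ φ n x)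
    (hc : ∀ᵐ x ∂μ, ∀ a < c, ∀ᶠ n in atTop, a < φ n x)
    (hL : Tendsto (fun n ↦ ∫ x, φ n x ∂μ) atTop (𝓝 L)) : c ≤ L := by
  have hmin (n : ℕ) : Integrable (fun x ↦ min (φ n x) c) μ := (hφ n).inf (integrable_const c)
  have htrunc : Tendsto (fun n ↦ ∫ x, min (φ n x) c ∂μ) atTop (𝓝 (∫ _, c ∂μ)) := by
    refine tendsto_integral_of_dominated_convergence (fun _ ↦ max |min b c| |c|)
      (fun n ↦ (hmin n).aestronglyMeasurable) (integrable_const _)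
      (fun n ↦ ae_of_all _ fun x ↦ ?_) ?_
    · exact abs_le_max_abs_abs (min_le_min_right c (hb n x)) (min_le_right _ _)
    · filter_upwards [hc] with x hx
      refine tendsto_order.2 ⟨fun a ha ↦ ?_, fun a ha ↦
        .of_forall fun n ↦ (min_le_right _ _).trans_lt ha⟩
      filter_upwards [hx a ha] with n hn
      exact lt_min hn ha
  rw [integral_const, probReal_univ, one_smul] at htrunc
  exact le_of_tendsto_of_tendsto' htrunc hL fun n ↦
    integral_mono (hmin n) (hφ n) fun x ↦ min_le_left _ _

end Integral

section BirkhoffErgodicTheorem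

variable {X : Type*} {T : X → X} {g : X → ℝ}

/-- The maximum of the Birkhoff sums of `g` over the times `0, …, n`, encoded by the recursion
`M_{n+1} = max 0 (g + M_n ∘ T)`, which is the form in which the maximal ergodic argument uses it. -/
def maxBirkhoffSum (T : X → X) (g : X → ℝ) : ℕ → X → ℝ
  | 0, _ => 0
  | n + 1, x => max 0 (g x + maxBirkhoffSum T g n (T x))

lemma maxBirkhoffSum_nonneg (n : ℕ) (x : X) : 0 ≤ maxBirkhoffSum T g n x := by
  cases n with
  | zero => exact le_rfl
  | succ n => exact le_max_left _ _

lemma monotone_maxBirkhoffSum : Monotone (maxBirkhoffSum T g) := by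
  refine monotone_nat_of_le_succ fun n ↦ ?_
  induction n with
  | zero => exact fun x ↦ maxBirkhoffSum_nonneg 1 x
  | succ n ih => exact fun x ↦ max_le_max_left 0 (add_le_add_right (ih (T x)) (g x))

lemma birkhoffSum_le_maxBirkhoffSum (n : ℕ) (x : X) :
    birkhoffSum T g n x ≤ maxBirkhoffSum T g n x := by
  induction n generalizing x with
  | zero => exact (birkhoffSum_zero T g x).le
  | succ n ih =>
    rw [birkhoffSum_succ']
    exact le_max_of_le_right (add_le_add_right (ih (T x)) (g x))

lemma maxBirkhoffSum_succ_sub_comp (n : ℕ) (x : X) :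
    maxBirkhoffSum T g (n + 1) x - maxBirkhoffSum T g n (T x) =
      max (-maxBirkhoffSum T g n (T x)) (g x) := by
  rw [maxBirkhoffSum, ← max_sub_sub_right, zero_sub, add_sub_cancel_right]

lemma tendsto_maxBirkhoffSum_atTop {x : X}
    (hx : ¬BddAbove (Set.range fun n ↦ birkhoffSum T g n x)) :
    Tendsto (fun n ↦ maxBirkhoffSum T g n x) atTop atTop := by
  refine tendsto_atTop_atTop_of_monotone (fun m n hmn ↦ monotone_maxBirkhoffSum hmn x) fun b ↦ ?_
  obtain ⟨_, ⟨n, rfl⟩, hn⟩ := not_bddAbove_iff.1 hx b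
  exact ⟨n, hn.le.trans (birkhoffSum_le_maxBirkhoffSum n x)⟩

lemma bddAbove_birkhoffSum_comp_iff (x : X) :
    BddAbove (Set.range fun n ↦ birkhoffSum T g n (T x)) ↔
      BddAbove (Set.range fun n ↦ birkhoffSum T g n x) := by
  simp only [bddAbove_def, Set.forall_mem_range]
  constructor
  · rintro ⟨C, hC⟩
    refine ⟨max 0 (g x + C), fun n ↦ ?_⟩
    cases n with
    | zero => exact (birkhoffSum_zero T g x).trans_le (le_max_left _ _)
    | succ n =>
      rw [birkhoffSum_succ']
      exact le_max_of_le_right (add_le_add_right (hC n) (g x))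
  · rintro ⟨C, hC⟩
    refine ⟨C - g x, fun n ↦ ?_⟩
    rw [le_sub_iff_add_le', ← birkhoffSum_succ']
    exact hC (n + 1)

lemma eventually_birkhoffAverage_lt_of_bddAbove {c : X → ℝ} (hc : c ∘ T = c) {ε : ℝ} (hε : 0 < ε)
    {x : X} (hx : BddAbove (Set.range fun n ↦ birkhoffSum T (fun x ↦ g x - c x - ε) n x)) :
    ∀ᶠ n in atTop, birkhoffAverage ℝ T g n x < c x + 2 * ε := by
  obtain ⟨C, hC⟩ := hx
  have hsum (n : ℕ) : birkhoffSum T g n x ≤ C + n * (c x + ε) := by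
    have hcsum := congrFun (birkhoffSum_of_comp_eq hc n) x
    have hn := hC (Set.mem_range_self n)
    simp only [birkhoffSum, Finset.sum_sub_distrib, Finset.sum_const, Finset.card_range,
      nsmul_eq_mul, Pi.smul_apply] at hcsum hn ⊢
    linarith
  have hlim : Tendsto (fun n : ℕ ↦ C / n) atTop (𝓝 0) :=
    tendsto_const_nhds.div_atTop tendsto_natCast_atTop_atTop
  filter_upwards [hlim.eventually_lt_const hε, eventually_gt_atTop 0] with n hn hn0
  have hn0' : (0 : ℝ) < n := Nat.cast_pos.2 hn0
  calc birkhoffAverage ℝ T g n x ≤ (n : ℝ)⁻¹ * (C + n * (c x + ε)) :=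
        mul_le_mul_of_nonneg_left (hsum n) (inv_nonneg.2 hn0'.le)
    _ = C / n + (c x + ε) := by field_simp
    _ < c x + 2 * ε := by linarith

variable [MeasurableSpace X] {μ : Measure X}

lemma integrable_maxBirkhoffSum (hT : MeasurePreserving T μ μ) (hg : Integrable g μ) (n : ℕ) :
    Integrable (maxBirkhoffSum T g n) μ := by
  induction n with
  | zero => exact integrable_zero X ℝ μ
  | succ n ih =>
    exact (integrable_zero X ℝ μ).sup (hg.add (hT.integrable_comp_of_integrable ih))

lemma integral_max_neg_maxBirkhoffSum_nonneg (hT : MeasurePreserving T μ μ)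
    (hg : Integrable g μ) (n : ℕ) :
    0 ≤ ∫ x, max (-maxBirkhoffSum T g n (T x)) (g x) ∂μ := by
  have hM := integrable_maxBirkhoffSum hT hg
  have hMT : Integrable (fun x ↦ maxBirkhoffSum T g n (T x)) μ :=
    hT.integrable_comp_of_integrable (hM n)
  simp only [← maxBirkhoffSum_succ_sub_comp]
  rw [integral_sub (hM (n + 1)) hMT,
    integral_comp_of_measurePreserving hT (hM n).aestronglyMeasurable, sub_nonneg]
  exact integral_mono (hM n) (hM (n + 1)) (monotone_maxBirkhoffSum n.le_succ)

/- The functions `max (-M_n ∘ T) g` have nonnegative integral, and where the Birkhoff sums are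
unbounded they eventually equal `g`. -/
theorem integral_nonneg_of_ae_not_bddAbove_birkhoffSum (hT : MeasurePreserving T μ μ)
    (hg : Integrable g μ)
    (hunbdd : ∀ᵐ x ∂μ, ¬BddAbove (Set.range fun n ↦ birkhoffSum T g n x)) :
    0 ≤ ∫ x, g x ∂μ := by
  have hM := integrable_maxBirkhoffSum hT hg
  refine ge_of_tendsto' (tendsto_integral_of_dominated_convergence (fun x ↦ |g x|)
    (fun n ↦ ((hT.integrable_comp_of_integrable (hM n)).neg.sup hg).aestronglyMeasurable)
    hg.abs (fun n ↦ ae_of_all _ fun x ↦ ?_) ?_)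
    (integral_max_neg_maxBirkhoffSum_nonneg hT hg)
  · have hneg : -maxBirkhoffSum T g n (T x) ≤ 0 := neg_nonpos.2 (maxBirkhoffSum_nonneg n (T x))
    exact abs_le.2 ⟨(neg_abs_le (g x)).trans (le_max_right _ _),
      max_le (hneg.trans (abs_nonneg _)) (le_abs_self _)⟩
  · filter_upwards [hunbdd] with x hx
    have hlim := tendsto_maxBirkhoffSum_atTop (mt (bddAbove_birkhoffSum_comp_iff x).1 hx)
    refine tendsto_const_nhds.congr' ?_
    filter_upwards [hlim.eventually_ge_atTop (-g x)] with n hn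
    exact (max_eq_right (neg_le.1 hn)).symm

lemma measurableSet_invariants_not_bddAbove_birkhoffSum (hT : Measurable T) (hg : Measurable g) :
    MeasurableSet[MeasurableSpace.invariants T]
      {x | ¬BddAbove (Set.range fun n ↦ birkhoffSum T g n x)} := by
  refine MeasurableSpace.measurableSet_invariants.2
    ⟨(measurableSet_bddAbove_range fun n ↦ ?_).compl,
      Set.ext fun x ↦ not_congr (bddAbove_birkhoffSum_comp_iff x)⟩
  exact Finset.measurable_fun_sum _ fun j _ ↦ hg.comp (hT.iterate j)

variable [IsFiniteMeasure μ]

lemma ae_bddAbove_birkhoffSum_sub_condExp (hT : MeasurePreserving T μ μ) (hgm : Measurable g)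
    (hg : Integrable g μ) {ε : ℝ} (hε : 0 < ε) :
    ∀ᵐ x ∂μ, BddAbove (Set.range fun n ↦
      birkhoffSum T (fun x ↦ g x - (μ[g|MeasurableSpace.invariants T]) x - ε) n x) := by
  have hI := MeasurableSpace.invariants_le T
  set E := μ[g|MeasurableSpace.invariants T] with hE
  have hEm : Measurable E := (stronglyMeasurable_condExp.mono hI).measurable
  have hEi : Integrable E μ := integrable_condExp
  set A := {x | ¬BddAbove (Set.range fun n ↦ birkhoffSum T (fun x ↦ g x - E x - ε) n x)}
  have hA : MeasurableSet[MeasurableSpace.invariants T] A :=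
    measurableSet_invariants_not_bddAbove_birkhoffSum hT.measurable ((hgm.sub hEm).sub_const ε)
  have hTA : MeasurePreserving T (μ.restrict A) (μ.restrict A) := by
    simpa only [hA.2] using hT.restrict_preimage hA.1
  have hgE : Integrable (fun x ↦ g x - E x) μ := hg.sub hEi
  have hint : ∫ x in A, (g x - E x - ε) ∂μ = -(ε * μ.real A) := by
    rw [integral_sub hgE.integrableOn (integrable_const ε),
      integral_sub hg.integrableOn hEi.integrableOn, hE, setIntegral_condExp hI hg hA,
      setIntegral_const, smul_eq_mul, sub_self, zero_sub, mul_comm]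
  have hnonneg : 0 ≤ ∫ x in A, (g x - E x - ε) ∂μ :=
    integral_nonneg_of_ae_not_bddAbove_birkhoffSum hTA
      (hgE.sub (integrable_const ε)).integrableOn (ae_restrict_mem hA.1)
  rw [hint, neg_nonneg] at hnonneg
  exact (measureReal_eq_zero_iff (by finiteness)).1
    (le_antisymm (nonpos_of_mul_nonpos_right hnonneg hε) measureReal_nonneg)

lemma ae_eventually_birkhoffAverage_lt (hT : MeasurePreserving T μ μ) (hgm : Measurable g)
    (hg : Integrable g μ) :
    ∀ᵐ x ∂μ, ∀ ε > 0, ∀ᶠ n in atTop,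
      birkhoffAverage ℝ T g n x < (μ[g|MeasurableSpace.invariants T]) x + ε := by
  have hinv := MeasurableSpace.comp_eq_of_measurable_invariants
    (stronglyMeasurable_condExp (f := g) (μ := μ) (m := MeasurableSpace.invariants T)).measurable
  have hbdd := ae_all_iff.2 fun m : ℕ ↦
    ae_bddAbove_birkhoffSum_sub_condExp hT hgm hg (Nat.one_div_pos_of_nat (α := ℝ) (n := m))
  filter_upwards [hbdd] with x hx ε hε
  obtain ⟨m, hm⟩ := exists_nat_one_div_lt (half_pos hε)
  filter_upwards [eventually_birkhoffAverage_lt_of_bddAbove hinv Nat.one_div_pos_of_nat (hx m)]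
    with n hn
  linarith

theorem ae_tendsto_birkhoffAverage (hT : MeasurePreserving T μ μ) (hg : Integrable g μ) :
    ∀ᵐ x ∂μ, Tendsto (fun n ↦ birkhoffAverage ℝ T g n x) atTop
      (𝓝 ((μ[g|MeasurableSpace.invariants T]) x)) := by
  wlog hgm : Measurable g generalizing g
  · obtain ⟨g', hg', hgg'⟩ := hg.aestronglyMeasurable.aemeasurable
    filter_upwards [this (hg.congr hgg') hg', condExp_congr_ae hgg', ae_all_iff.2 fun n ↦
      hT.quasiMeasurePreserving.birkhoffAverage_ae_eq_of_ae_eq ℝ hgg' n] with x hx hE hA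
    rw [hE]
    simpa only [hA] using hx
  filter_upwards [ae_eventually_birkhoffAverage_lt hT hgm hg,
    ae_eventually_birkhoffAverage_lt hT hgm.neg hg.neg, condExp_neg g _] with x hupper hlower hneg
  refine tendsto_order.2 ⟨fun a ha ↦ ?_, fun a ha ↦ ?_⟩
  · filter_upwards [hlower _ (sub_pos.2 ha)] with n hn
    rw [hneg, birkhoffAverage_neg] at hn
    simp only [Pi.neg_apply] at hn
    linarith
  · filter_upwards [hupper _ (sub_pos.2 ha)] with n hn
    linarith

end BirkhoffErgodicTheorem

section Riesz

lemma exists_linearMap_le_sublinear_apply_eq {E : Type*} [AddCommGroup E] [Module ℝ E]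
    {N : E → ℝ} (N_smul : ∀ c : ℝ, 0 < c → ∀ x, N (c • x) = c * N x)
    (N_add : ∀ x y, N (x + y) ≤ N x + N y) (x₀ : E) :
    ∃ Λ : E →ₗ[ℝ] ℝ, (∀ x, Λ x ≤ N x) ∧ Λ x₀ = N x₀ := by
  have N_zero : N 0 = 0 := by
    have h := N_smul 2 two_pos 0
    rw [smul_zero] at h
    linarith
  have N_neg (x : E) : 0 ≤ N x + N (-x) := by
    simpa only [add_neg_cancel, N_zero] using N_add x (-x)
  have hspan (c : ℝ) (hc : c • x₀ = 0) : RingHom.id ℝ c • N x₀ = 0 := by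
    rcases smul_eq_zero.1 hc with rfl | rfl
    · exact zero_smul ℝ _
    · rw [N_zero, smul_zero]
  have hle (c : ℝ) : c * N x₀ ≤ N (c • x₀) := by
    rcases lt_trichotomy c 0 with hc | rfl | hc
    · have h := N_neg (c • x₀)
      rw [← neg_smul, N_smul (-c) (neg_pos.2 hc)] at h
      linarith
    · rw [zero_mul, zero_smul, N_zero]
    · exact (N_smul c hc x₀).ge
  obtain ⟨Λ, hΛ, hΛN⟩ := exists_extension_of_le_sublinear
    (LinearPMap.mkSpanSingleton' x₀ (N x₀) hspan) N N_smul N_add <| by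
      rintro ⟨x, hx⟩
      obtain ⟨c, rfl⟩ := Submodule.mem_span_singleton.1 hx
      exact (LinearPMap.mkSpanSingleton'_apply ..).trans_le (hle c)
  exact ⟨Λ, hΛN, (hΛ ⟨x₀, Submodule.mem_span_singleton_self x₀⟩).trans
    (LinearPMap.mkSpanSingleton'_apply_self x₀ (N x₀) hspan _)⟩

variable {X : Type*} [TopologicalSpace X] [CompactSpace X] [T2Space X] [MeasurableSpace X]
  [BorelSpace X]

lemma exists_regular_integral_eq_of_nonneg (Λ : C(X, ℝ) →ₗ[ℝ] ℝ)
    (hΛ : ∀ h : C(X, ℝ), (∀ x, 0 ≤ h x) → 0 ≤ Λ h) :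
    ∃ μ : Measure X, μ.Regular ∧ ∀ h : C(X, ℝ), ∫ x, h x ∂μ = Λ h := by
  let P : CompactlySupportedContinuousMap X ℝ →ₚ[ℝ] ℝ := PositiveLinearMap.mk₀
    { toFun := fun h ↦ Λ h.toContinuousMap
      map_add' := fun g h ↦ Λ.map_add g.toContinuousMap h.toContinuousMap
      map_smul' := fun c h ↦ Λ.map_smul c h.toContinuousMap } fun h hh ↦ hΛ _ hh
  exact ⟨RealRMK.rieszMeasure P, inferInstance, fun h ↦
    RealRMK.integral_rieszMeasure P (CompactlySupportedContinuousMap.continuousMapEquiv h)⟩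

lemma exists_regular_integral_le_sublinear {N : C(X, ℝ) → ℝ}
    (N_smul : ∀ c : ℝ, 0 < c → ∀ h, N (c • h) = c * N h)
    (N_add : ∀ g h, N (g + h) ≤ N g + N h)
    (N_le : ∀ (h : C(X, ℝ)) (c : ℝ), (∀ x, h x ≤ c) → N h ≤ c) (h₀ : C(X, ℝ)) :
    ∃ μ : ProbabilityMeasure X, μ.toMeasure.Regular ∧
      (∀ h : C(X, ℝ), ∫ x, h x ∂μ.toMeasure ≤ N h) ∧ ∫ x, h₀ x ∂μ.toMeasure = N h₀ := by
  obtain ⟨Λ, hΛN, hΛ₀⟩ := exists_linearMap_le_sublinear_apply_eq N_smul N_add h₀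
  have hle (h : C(X, ℝ)) (c : ℝ) (hc : ∀ x, h x ≤ c) : Λ h ≤ c := (hΛN h).trans (N_le h c hc)
  have hpos (h : C(X, ℝ)) (hh : ∀ x, 0 ≤ h x) : 0 ≤ Λ h := by
    simpa only [map_neg, neg_nonpos] using hle (-h) 0 fun x ↦ neg_nonpos.2 (hh x)
  have hone : Λ 1 = 1 := by
    refine le_antisymm (hle 1 1 fun _ ↦ le_rfl) ?_
    simpa only [map_neg, neg_le_neg_iff] using hle (-1) (-1) fun _ ↦ le_rfl
  obtain ⟨μ, hreg, hμ⟩ := exists_regular_integral_eq_of_nonneg Λ hpos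
  have hreal : μ.real Set.univ = 1 := by
    simpa only [ContinuousMap.one_apply, integral_const, smul_eq_mul, mul_one, hone] using hμ 1
  have hprob : IsProbabilityMeasure μ := ⟨(ENNReal.toReal_eq_one_iff _).1 hreal⟩
  exact ⟨⟨μ, hprob⟩, hreg, fun h ↦ (hμ h).trans_le (hΛN h), (hμ h₀).trans hΛ₀⟩

lemma map_eq_of_forall_integral_comp_le {X Y : Type*} [TopologicalSpace X] [MeasurableSpace X]
    [BorelSpace X] [TopologicalSpace Y] [CompactSpace Y] [T2Space Y] [MeasurableSpace Y]
    [BorelSpace Y] {μ : Measure X} [IsFiniteMeasure μ] [μ.Regular] {ν : Measure Y} [ν.Regular]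
    {φ : X → Y} (hφ : Continuous φ)
    (h : ∀ g : C(Y, ℝ), ∫ x, g (φ x) ∂μ ≤ ∫ y, g y ∂ν) : μ.map φ = ν := by
  have : (μ.map φ).InnerRegularCompactLTTop :=
    Measure.InnerRegularCompactLTTop.map_of_continuous hφ
  refine Measure.ext_of_integral_eq_on_compactlySupported fun g ↦ ?_
  rw [integral_map hφ.measurable.aemeasurable (map_continuous g).aestronglyMeasurable]
  refine le_antisymm (h g.toContinuousMap) ?_
  have hneg := h (-g.toContinuousMap)
  simp only [ContinuousMap.neg_apply, integral_neg, neg_le_neg_iff] at hneg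
  exact hneg

end Riesz

section FiberSup

variable {Z Y : Type*} {π : Z → Y} {g h : Z → ℝ}

/-- The supremum of `h` over the fibre of `π` above `y`; it is a maximum, and hence independent of
the junk values of `sSup`, when `h` and `π` are continuous, `π` is surjective and `Z` is compact. -/
def fiberSup (π : Z → Y) (h : Z → ℝ) (y : Y) : ℝ := sSup (h '' (π ⁻¹' {y}))

lemma fiberSup_const_mul {c : ℝ} (hc : 0 ≤ c) (y : Y) :
    fiberSup π (fun z ↦ c * h z) y = c * fiberSup π h y := by
  rw [fiberSup, fiberSup, ← smul_eq_mul c (sSup _), ← Real.sSup_smul_of_nonneg hc,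
    ← Set.image_smul, Set.image_image]
  rfl

lemma fiberSup_comp (hsurj : Function.Surjective π) (g : Y → ℝ) : fiberSup π (g ∘ π) = g := by
  ext y
  rw [fiberSup, Set.image_comp, Set.image_preimage_eq _ hsurj, Set.image_singleton, csSup_singleton]

variable [TopologicalSpace Z] [CompactSpace Z] [TopologicalSpace Y] [T2Space Y]

lemma le_fiberSup (hπ : Continuous π) (hh : Continuous h) (z : Z) : h z ≤ fiberSup π h (π z) :=
  le_csSup (((isClosed_singleton.preimage hπ).isCompact.image hh).bddAbove)
    (Set.mem_image_of_mem h rfl)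

lemma exists_eq_fiberSup (hπ : Continuous π) (hsurj : Function.Surjective π) (hh : Continuous h)
    (y : Y) : ∃ z, π z = y ∧ h z = fiberSup π h y :=
  ((isClosed_singleton.preimage hπ).isCompact.image hh).sSup_mem (Set.Nonempty.image h (hsurj y))

lemma fiberSup_le (hπ : Continuous π) (hsurj : Function.Surjective π) (hh : Continuous h) {y : Y}
    {c : ℝ} (hc : ∀ z, π z = y → h z ≤ c) : fiberSup π h y ≤ c := by
  obtain ⟨z, hz, hhz⟩ := exists_eq_fiberSup hπ hsurj hh y
  exact hhz ▸ hc z hz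

lemma abs_fiberSup_le (hπ : Continuous π) (hsurj : Function.Surjective π) (hh : Continuous h)
    {C : ℝ} (hC : ∀ z, |h z| ≤ C) (y : Y) : |fiberSup π h y| ≤ C := by
  obtain ⟨z, -, hhz⟩ := exists_eq_fiberSup hπ hsurj hh y
  exact hhz ▸ hC z

lemma fiberSup_add_le (hπ : Continuous π) (hsurj : Function.Surjective π) (hg : Continuous g)
    (hh : Continuous h) (y : Y) :
    fiberSup π (fun z ↦ g z + h z) y ≤ fiberSup π g y + fiberSup π h y :=
  fiberSup_le hπ hsurj (hg.add hh) fun z hz ↦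
    hz ▸ add_le_add (le_fiberSup hπ hg z) (le_fiberSup hπ hh z)

variable [MeasurableSpace Y] [BorelSpace Y]

lemma measurable_fiberSup (hπ : Continuous π) (hsurj : Function.Surjective π)
    (hh : Continuous h) : Measurable (fiberSup π h) := by
  refine measurable_of_Ici fun a ↦ ?_
  have hpre : fiberSup π h ⁻¹' Set.Ici a = π '' (h ⁻¹' Set.Ici a) := by
    ext y
    constructor
    · intro hy
      obtain ⟨z, hz, hhz⟩ := exists_eq_fiberSup hπ hsurj hh y
      exact ⟨z, hhz.ge.trans' hy, hz⟩
    · rintro ⟨z, hz, rfl⟩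
      exact le_trans hz (le_fiberSup hπ hh z)
  rw [hpre]
  exact ((isClosed_Ici.preimage hh).isCompact.image hπ).isClosed.measurableSet

lemma integrable_fiberSup {ν : Measure Y} [IsFiniteMeasure ν] (hπ : Continuous π)
    (hsurj : Function.Surjective π) (hh : Continuous h) : Integrable (fiberSup π h) ν := by
  obtain ⟨C, hC⟩ := hh.bounded_above_of_compact_support (.of_compactSpace h)
  exact .of_bound (measurable_fiberSup hπ hsurj hh).aestronglyMeasurable C
    (ae_of_all _ (abs_fiberSup_le hπ hsurj hh hC))

end FiberSup

section BirkhoffAverage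

variable {X : Type*} {T : X → X} {g : X → ℝ}

lemma birkhoffAverage_le {n : ℕ} (hn : n ≠ 0) {c : ℝ} (hc : ∀ x, g x ≤ c) (x : X) :
    birkhoffAverage ℝ T g n x ≤ c := by
  rw [birkhoffAverage, smul_eq_mul, inv_mul_le_iff₀ (Nat.cast_pos.2 hn.bot_lt)]
  simpa only [birkhoffSum, Finset.card_range, nsmul_eq_mul] using
    Finset.sum_le_card_nsmul (Finset.range n) _ c fun j _ ↦ hc (T^[j] x)

lemma abs_birkhoffAverage_le {C : ℝ} (hC : ∀ x, |g x| ≤ C) (n : ℕ) (x : X) :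
    |birkhoffAverage ℝ T g n x| ≤ C := by
  rcases eq_or_ne n 0 with rfl | hn
  · rw [birkhoffAverage_zero, abs_zero]
    exact (abs_nonneg _).trans (hC x)
  · refine abs_le'.2 ⟨birkhoffAverage_le hn (fun y ↦ (abs_le'.1 (hC y)).1) x, ?_⟩
    rw [← Pi.neg_apply, ← Pi.neg_apply, ← birkhoffAverage_neg]
    exact birkhoffAverage_le hn (fun y ↦ (abs_le'.1 (hC y)).2) x

lemma birkhoffAverage_comp_of_semiconj {Y : Type*} {S : Y → Y} {φ : X → Y}
    (hφ : Function.Semiconj φ T S) (g : Y → ℝ) (n : ℕ) :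
    birkhoffAverage ℝ T (g ∘ φ) n = birkhoffAverage ℝ S g n ∘ φ := by
  ext x
  simp only [birkhoffAverage, birkhoffSum, Function.comp_apply, (hφ.iterate_right _).eq]

lemma integral_birkhoffAverage [MeasurableSpace X] {μ : Measure X} (hT : MeasurePreserving T μ μ)
    (hg : Integrable g μ) {n : ℕ} (hn : n ≠ 0) :
    ∫ x, birkhoffAverage ℝ T g n x ∂μ = ∫ x, g x ∂μ := by
  have hterm (j : ℕ) : ∫ x, g (T^[j] x) ∂μ = ∫ x, g x ∂μ :=
    integral_comp_of_measurePreserving (hT.iterate j) hg.aestronglyMeasurable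
  have hint (j : ℕ) : Integrable (fun x ↦ g (T^[j] x)) μ :=
    (hT.iterate j).integrable_comp_of_integrable hg
  simp only [birkhoffAverage, birkhoffSum, smul_eq_mul]
  rw [integral_const_mul, integral_finsetSum _ fun j _ ↦ hint j]
  simp only [hterm, Finset.sum_const, Finset.card_range, nsmul_eq_mul]
  exact inv_mul_cancel_left₀ (Nat.cast_ne_zero.2 hn) _

lemma continuous_birkhoffSum [TopologicalSpace X] (hT : Continuous T) (hg : Continuous g) (n : ℕ) :
    Continuous (birkhoffSum T g n) :=
  continuous_finsetSum _ fun j _ ↦ hg.comp (hT.iterate j)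

lemma continuous_birkhoffAverage [TopologicalSpace X] (hT : Continuous T) (hg : Continuous g)
    (n : ℕ) : Continuous (birkhoffAverage ℝ T g n) :=
  continuous_const.mul (continuous_birkhoffSum hT hg n)

end BirkhoffAverage

section FactorMap

variable {Z Y : Type*} [TopologicalSpace Z] [TopologicalSpace Y] {U : Z → Z} {S : Y → Y} {π : Z → Y}

/-- A factor map `π : (Z, U) → (Y, S)` between topological dynamical systems, given by continuous
maps which are not required to be invertible. -/
structure IsFactorMap (U : Z → Z) (S : Y → Y) (π : Z → Y) : Prop where
  continuous_dom : Continuous U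
  continuous_cod : Continuous S
  continuous : Continuous π
  surjective : Function.Surjective π
  semiconj : Function.Semiconj π U S

/-- The limit of the integrals over the factor of the fibrewise maxima of the Birkhoff averages
of `h`. It exists for continuous `h` and invariant `ν`, by Fekete's lemma. -/
def maxFiberAverage (U : Z → Z) (π : Z → Y) [MeasurableSpace Y] (ν : Measure Y) (h : Z → ℝ) : ℝ :=
  limUnder atTop fun n ↦ ∫ y, fiberSup π (birkhoffAverage ℝ U h n) y ∂ν

variable [CompactSpace Z] [T2Space Y] {g h : Z → ℝ}

namespace IsFactorMap

lemma fiberSup_birkhoffSum_add_le (hπ : IsFactorMap U S π) (hh : Continuous h) (m n : ℕ) (y : Y) :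
    fiberSup π (birkhoffSum U h (m + n)) y ≤
      fiberSup π (birkhoffSum U h m) y + fiberSup π (birkhoffSum U h n) (S^[m] y) := by
  have hcont := continuous_birkhoffSum hπ.continuous_dom hh
  refine fiberSup_le hπ.continuous hπ.surjective (hcont (m + n)) ?_
  rintro z rfl
  rw [birkhoffSum_add, ← (hπ.semiconj.iterate_right m).eq]
  exact add_le_add (le_fiberSup hπ.continuous (hcont m) z) (le_fiberSup hπ.continuous (hcont n) _)

variable [MeasurableSpace Y] [BorelSpace Y] {ν : Measure Y}

lemma integrable_fiberSup_birkhoffSum [IsFiniteMeasure ν] (hπ : IsFactorMap U S π)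
    (hh : Continuous h) (n : ℕ) : Integrable (fiberSup π (birkhoffSum U h n)) ν :=
  integrable_fiberSup hπ.continuous hπ.surjective (continuous_birkhoffSum hπ.continuous_dom hh n)

lemma integrable_fiberSup_birkhoffAverage [IsFiniteMeasure ν] (hπ : IsFactorMap U S π)
    (hh : Continuous h) (n : ℕ) : Integrable (fiberSup π (birkhoffAverage ℝ U h n)) ν :=
  integrable_fiberSup hπ.continuous hπ.surjective
    (continuous_birkhoffAverage hπ.continuous_dom hh n)

lemma subadditive_integral_fiberSup_birkhoffSum [IsFiniteMeasure ν] (hπ : IsFactorMap U S π)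
    (hS : MeasurePreserving S ν ν) (hh : Continuous h) :
    Subadditive fun n ↦ ∫ y, fiberSup π (birkhoffSum U h n) y ∂ν := by
  intro m n
  have hint := hπ.integrable_fiberSup_birkhoffSum (ν := ν) hh
  have hSint : Integrable (fun y ↦ fiberSup π (birkhoffSum U h n) (S^[m] y)) ν :=
    (hS.iterate m).integrable_comp_of_integrable (hint n)
  calc ∫ y, fiberSup π (birkhoffSum U h (m + n)) y ∂ν
      ≤ ∫ y, (fiberSup π (birkhoffSum U h m) y + fiberSup π (birkhoffSum U h n) (S^[m] y)) ∂ν :=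
        integral_mono (hint (m + n)) ((hint m).add hSint) (hπ.fiberSup_birkhoffSum_add_le hh m n)
    _ = ∫ y, fiberSup π (birkhoffSum U h m) y ∂ν + ∫ y, fiberSup π (birkhoffSum U h n) y ∂ν := by
        rw [integral_add (hint m) hSint,
          integral_comp_of_measurePreserving (hS.iterate m) (hint n).aestronglyMeasurable]

variable [IsProbabilityMeasure ν]

lemma tendsto_maxFiberAverage (hπ : IsFactorMap U S π) (hS : MeasurePreserving S ν ν)
    (hh : Continuous h) :
    Tendsto (fun n ↦ ∫ y, fiberSup π (birkhoffAverage ℝ U h n) y ∂ν) atTop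
      (𝓝 (maxFiberAverage U π ν h)) := by
  have hdiv (n : ℕ) : (∫ y, fiberSup π (birkhoffSum U h n) y ∂ν) / n =
      ∫ y, fiberSup π (birkhoffAverage ℝ U h n) y ∂ν := by
    rw [div_eq_inv_mul, ← integral_const_mul]
    refine integral_congr_ae (ae_of_all _ fun y ↦ ?_)
    exact (fiberSup_const_mul (inv_nonneg.2 n.cast_nonneg) y).symm
  obtain ⟨C, hC⟩ := hh.bounded_above_of_compact_support (.of_compactSpace h)
  have hbdd : BddBelow (Set.range fun n : ℕ ↦ (∫ y, fiberSup π (birkhoffSum U h n) y ∂ν) / n) := by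
    refine ⟨-C, ?_⟩
    rintro _ ⟨n, rfl⟩
    have hn := abs_integral_le (μ := ν) (abs_fiberSup_le hπ.continuous hπ.surjective
      (continuous_birkhoffAverage hπ.continuous_dom hh n) (abs_birkhoffAverage_le hC n))
    exact (abs_le.1 hn).1.trans_eq (hdiv n).symm
  exact tendsto_nhds_limUnder
    ⟨_, ((hπ.subadditive_integral_fiberSup_birkhoffSum hS hh).tendsto_lim hbdd).congr hdiv⟩

lemma maxFiberAverage_const_mul (hπ : IsFactorMap U S π) (hS : MeasurePreserving S ν ν)
    (hh : Continuous h) {c : ℝ} (hc : 0 ≤ c) :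
    maxFiberAverage U π ν (fun z ↦ c * h z) = c * maxFiberAverage U π ν h := by
  refine tendsto_nhds_unique (hπ.tendsto_maxFiberAverage hS (continuous_const.mul hh))
    (((hπ.tendsto_maxFiberAverage hS hh).const_mul c).congr fun n ↦ ?_)
  rw [← integral_const_mul]
  refine integral_congr_ae (ae_of_all _ fun y ↦ ?_)
  have hsmul : birkhoffAverage ℝ U (fun z ↦ c * h z) n = fun z ↦ c * birkhoffAverage ℝ U h n z := by
    ext z
    exact (map_birkhoffAverage ℝ ℝ (AddMonoidHom.mulLeft c) U h n z).symm
  simp only [hsmul, fiberSup_const_mul hc]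

lemma maxFiberAverage_add_le (hπ : IsFactorMap U S π) (hS : MeasurePreserving S ν ν)
    (hg : Continuous g) (hh : Continuous h) :
    maxFiberAverage U π ν (g + h) ≤ maxFiberAverage U π ν g + maxFiberAverage U π ν h := by
  have hint {h : Z → ℝ} (hh : Continuous h) (n : ℕ) :=
    hπ.integrable_fiberSup_birkhoffAverage (ν := ν) hh n
  refine le_of_tendsto_of_tendsto' (hπ.tendsto_maxFiberAverage hS (hg.add hh))
    ((hπ.tendsto_maxFiberAverage hS hg).add (hπ.tendsto_maxFiberAverage hS hh)) fun n ↦ ?_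
  rw [← integral_add (hint hg n) (hint hh n)]
  refine integral_mono (hint (hg.add hh) n) ((hint hg n).add (hint hh n)) fun y ↦ ?_
  rw [birkhoffAverage_add]
  exact fiberSup_add_le hπ.continuous hπ.surjective
    (continuous_birkhoffAverage hπ.continuous_dom hg n)
    (continuous_birkhoffAverage hπ.continuous_dom hh n) y

lemma maxFiberAverage_le_of_tendsto (hπ : IsFactorMap U S π) (hS : MeasurePreserving S ν ν)
    (hh : Continuous h) {c : ℕ → ℝ} {L : ℝ} (hc : Tendsto c atTop (𝓝 L))
    (hle : ∀ᶠ n in atTop, ∀ z, birkhoffAverage ℝ U h n z ≤ c n) :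
    maxFiberAverage U π ν h ≤ L := by
  refine le_of_tendsto_of_tendsto (hπ.tendsto_maxFiberAverage hS hh) hc ?_
  filter_upwards [hle] with n hn
  have hmono := integral_mono (hπ.integrable_fiberSup_birkhoffAverage (ν := ν) hh n)
    (integrable_const (c n)) fun y ↦ fiberSup_le hπ.continuous hπ.surjective
      (continuous_birkhoffAverage hπ.continuous_dom hh n) fun z _ ↦ hn z
  simpa only [integral_const, probReal_univ, one_smul] using hmono

lemma maxFiberAverage_le (hπ : IsFactorMap U S π) (hS : MeasurePreserving S ν ν)
    (hh : Continuous h) {c : ℝ} (hc : ∀ z, h z ≤ c) : maxFiberAverage U π ν h ≤ c := by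
  refine hπ.maxFiberAverage_le_of_tendsto hS hh tendsto_const_nhds ?_
  filter_upwards [eventually_ne_atTop 0] with n hn
  exact birkhoffAverage_le hn hc

lemma maxFiberAverage_comp_sub_le (hπ : IsFactorMap U S π) (hS : MeasurePreserving S ν ν)
    (hh : Continuous h) : maxFiberAverage U π ν (h ∘ U - h) ≤ 0 := by
  obtain ⟨C, hC⟩ := hh.bounded_above_of_compact_support (.of_compactSpace h)
  have hlim : Tendsto (fun n : ℕ ↦ (n : ℝ)⁻¹ * (C + C)) atTop (𝓝 0) := by
    simpa only [zero_mul] using tendsto_inv_atTop_nhds_zero_nat.mul_const (C + C)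
  refine hπ.maxFiberAverage_le_of_tendsto hS ((hh.comp hπ.continuous_dom).sub hh) hlim
    (.of_forall fun n z ↦ ?_)
  have htele : birkhoffAverage ℝ U (h ∘ U - h) n z = (n : ℝ)⁻¹ * (h (U^[n] z) - h z) := by
    rw [birkhoffAverage_sub, Pi.sub_apply, Pi.sub_apply,
      birkhoffAverage_comp_of_semiconj (Function.Commute.refl U)]
    exact birkhoffAverage_apply_sub_birkhoffAverage ..
  rw [htele]
  have h₁ := (abs_le.1 (hC (U^[n] z))).2
  have h₂ := (abs_le.1 (hC z)).1
  gcongr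
  linarith

lemma maxFiberAverage_comp (hπ : IsFactorMap U S π) (hS : MeasurePreserving S ν ν) {g : Y → ℝ}
    (hg : Continuous g) : maxFiberAverage U π ν (g ∘ π) = ∫ y, g y ∂ν := by
  have hint : Integrable g ν :=
    fiberSup_comp hπ.surjective g ▸
      integrable_fiberSup hπ.continuous hπ.surjective (hg.comp hπ.continuous)
  refine tendsto_nhds_unique (hπ.tendsto_maxFiberAverage hS (hg.comp hπ.continuous))
    (tendsto_const_nhds.congr' ?_)
  filter_upwards [eventually_ne_atTop 0] with n hn
  rw [birkhoffAverage_comp_of_semiconj hπ.semiconj, fiberSup_comp hπ.surjective,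
    integral_birkhoffAverage hS hint hn]

end IsFactorMap

end FactorMap

section InvariantLift

variable {Z Y : Type*} [TopologicalSpace Z] [CompactSpace Z] [T2Space Z] [MeasurableSpace Z]
  [BorelSpace Z] [TopologicalSpace Y] [CompactSpace Y] [T2Space Y] [MeasurableSpace Y]
  [BorelSpace Y] {U : Z → Z} {S : Y → Y} {π : Z → Y}

/- A measure dominated by the sublinear functional `maxFiberAverage U π ν` is automatically an
invariant lift of `ν`, because the functional is nonpositive on coboundaries and restricts to
integration against `ν` on functions pulled back from `Y`. -/
theorem IsFactorMap.exists_invariant_lift (hπ : IsFactorMap U S π) {ν : Measure Y}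
    [IsProbabilityMeasure ν] [ν.Regular] (hS : MeasurePreserving S ν ν) {h : Z → ℝ}
    (hh : Continuous h) :
    ∃ lam ∈ invMeas U, lam.toMeasure.map π = ν ∧
      ∫ z, h z ∂lam.toMeasure = maxFiberAverage U π ν h := by
  obtain ⟨lam, hreg, hle, heq⟩ := exists_regular_integral_le_sublinear
    (N := fun h : C(Z, ℝ) ↦ maxFiberAverage U π ν h)
    (fun c hc h ↦ hπ.maxFiberAverage_const_mul hS h.continuous hc.le)
    (fun g h ↦ hπ.maxFiberAverage_add_le hS g.continuous h.continuous)
    (fun h c hc ↦ hπ.maxFiberAverage_le hS h.continuous hc) ⟨h, hh⟩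
  refine ⟨lam, map_eq_of_forall_integral_comp_le hπ.continuous_dom fun g ↦ ?_,
    map_eq_of_forall_integral_comp_le hπ.continuous fun g ↦ ?_, heq⟩
  · have hgU : Continuous (g ∘ U) := g.continuous.comp hπ.continuous_dom
    have hint {h : Z → ℝ} (hh : Continuous h) : Integrable h lam.toMeasure :=
      hh.integrable_of_hasCompactSupport (.of_compactSpace h)
    have hcob : ∫ z, ((g ∘ U) z - g z) ∂lam.toMeasure ≤ maxFiberAverage U π ν (g ∘ U - g) :=
      hle (⟨g ∘ U, hgU⟩ - g)
    rw [integral_sub (hint hgU) (hint g.continuous)] at hcob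
    exact sub_nonpos.1 (hcob.trans (hπ.maxFiberAverage_comp_sub_le hS g.continuous))
  · exact (hle (g.comp ⟨π, hπ.continuous⟩)).trans_eq (hπ.maxFiberAverage_comp hS g.continuous)

lemma invMeas_nonempty [Nonempty Z] (hU : Continuous U) : (invMeas U).Nonempty := by
  have hunit : IsFactorMap U (id : Unit → Unit) (fun _ ↦ ()) :=
    { continuous_dom := hU
      continuous_cod := continuous_id
      continuous := continuous_const
      surjective := Function.surjective_to_subsingleton _
      semiconj := fun _ ↦ rfl }
  obtain ⟨lam, hlam, -⟩ := hunit.exists_invariant_lift (.id (Measure.dirac ()))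
    (continuous_const (y := (0 : ℝ)))
  exact ⟨lam, hlam⟩

end InvariantLift

section RegularPoints

variable {Z Y : Type*} {U : Z → Z} {S : Y → Y} {π : Z → Y} {f : Z → ℝ}

lemma ae_mem_regPts [MeasurableSpace Z] {lam : Measure Z} [IsFiniteMeasure lam]
    (hU : MeasurePreserving U lam lam) (hf : Integrable f lam) : ∀ᵐ z ∂lam, z ∈ regPts U f := by
  filter_upwards [ae_tendsto_birkhoffAverage hU hf] with z hz
  exact ⟨_, hz⟩

lemma exists_tendsto_birk_lt_of_betaF_lt {C : ℝ} (hC : ∀ z, |f z| ≤ C) {z : Z}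
    (hz : z ∈ regPts U f) {c : ℝ} (hc : betaF U π f < c) :
    ∃ z' L, π z' = π z ∧ Tendsto (fun k ↦ birk U f k z') atTop (𝓝 L) ∧ L < c := by
  set limits : Y → Set ℝ := fun y ↦ {L | ∃ z ∈ regPts U f, π z = y ∧
    Tendsto (fun k ↦ birk U f k z) atTop (𝓝 L)}
  have habs {y : Y} {L : ℝ} (hL : L ∈ limits y) : |L| ≤ C := by
    obtain ⟨w, -, -, hw⟩ := hL
    exact le_of_tendsto' hw.abs fun k ↦ abs_birkhoffAverage_le hC k w
  have hne {w : Z} (hw : w ∈ regPts U f) : (limits (π w)).Nonempty :=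
    hw.imp fun L hL ↦ ⟨w, hw, rfl, hL⟩
  have hbddAbove : BddAbove {r | ∃ y ∈ π '' regPts U f, r = sInf (limits y)} := by
    refine ⟨C, ?_⟩
    rintro _ ⟨_, ⟨w, hw, rfl⟩, rfl⟩
    obtain ⟨L, hL⟩ := hne hw
    exact (csInf_le ⟨-C, fun L' hL' ↦ (abs_le.1 (habs hL')).1⟩ hL).trans (abs_le.1 (habs hL)).2
  have hinf : sInf (limits (π z)) < c :=
    (le_csSup hbddAbove ⟨π z, Set.mem_image_of_mem π hz, rfl⟩).trans_lt hc
  obtain ⟨L, ⟨z', -, hz', hL⟩, hLc⟩ := exists_lt_of_csInf_lt (hne hz) hinf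
  exact ⟨z', L, hz', hL, hLc⟩

lemma psi_le_integral [MeasurableSpace Z] [MeasurableSpace Y] {C : ℝ} (hC : ∀ z, |f z| ≤ C)
    {lam : ProbabilityMeasure Z} (hlam : lam ∈ invMeas U) {ν : ProbabilityMeasure Y}
    (hν : lam.toMeasure.map π = ν.toMeasure) : psi U π f ν ≤ ∫ z, f z ∂lam.toMeasure := by
  refine csInf_le ⟨-C, ?_⟩ ⟨lam, hlam, hν, rfl⟩
  rintro _ ⟨κ, -, -, rfl⟩
  exact (abs_le.1 (abs_integral_le hC)).1

variable [TopologicalSpace Z] [CompactSpace Z] [TopologicalSpace Y] [T2Space Y]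

namespace IsFactorMap

lemma eventually_lt_fiberSup_birkhoffAverage_neg (hπ : IsFactorMap U S π) (hf : Continuous f)
    {z : Z} (hz : z ∈ regPts U f) {a : ℝ} (ha : a < -betaF U π f) :
    ∀ᶠ n in atTop, a < fiberSup π (birkhoffAverage ℝ U (-f) n) (π z) := by
  obtain ⟨C, hC⟩ := hf.bounded_above_of_compact_support (.of_compactSpace f)
  obtain ⟨z', L, hz', hL, hLa⟩ := exists_tendsto_birk_lt_of_betaF_lt hC hz (lt_neg_of_lt_neg ha)
  filter_upwards [hL.eventually_lt_const hLa] with n hn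
  calc a < -birk U f n z' := lt_neg_of_lt_neg hn
    _ = birkhoffAverage ℝ U (-f) n z' := by rw [birkhoffAverage_neg]; rfl
    _ ≤ fiberSup π (birkhoffAverage ℝ U (-f) n) (π z) :=
      hz' ▸ le_fiberSup hπ.continuous (continuous_birkhoffAverage hπ.continuous_dom hf.neg n) z'

theorem neg_betaF_le_maxFiberAverage [MeasurableSpace Z] [BorelSpace Z] [MeasurableSpace Y]
    [BorelSpace Y] (hπ : IsFactorMap U S π) {lam : Measure Z} [IsProbabilityMeasure lam]
    (hU : MeasurePreserving U lam lam) {ν : Measure Y} (hlam : MeasurePreserving π lam ν)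
    (hf : Continuous f) : -betaF U π f ≤ maxFiberAverage U π ν (-f) := by
  have : IsProbabilityMeasure ν :=
    hlam.map_eq ▸ Measure.isProbabilityMeasure_map hlam.measurable.aemeasurable
  have hS : MeasurePreserving S ν ν :=
    hlam.of_semiconj hU hπ.semiconj hπ.continuous_cod.measurable
  have hA := continuous_birkhoffAverage hπ.continuous_dom hf.neg
  have hint (n : ℕ) : Integrable (fiberSup π (birkhoffAverage ℝ U (-f) n)) ν :=
    hπ.integrable_fiberSup_birkhoffAverage hf.neg n
  obtain ⟨C, hC⟩ := hf.neg.bounded_above_of_compact_support (.of_compactSpace (-f))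
  refine le_of_tendsto_integral_of_ae_eventually_lt (μ := lam) (b := -C)
    (φ := fun n z ↦ fiberSup π (birkhoffAverage ℝ U (-f) n) (π z))
    (fun n ↦ hlam.integrable_comp_of_integrable (hint n))
    (fun n z ↦ (abs_le.1 (abs_fiberSup_le hπ.continuous hπ.surjective (hA n)
      (abs_birkhoffAverage_le hC n) (π z))).1) ?_ ?_
  · filter_upwards [ae_mem_regPts hU
      (hf.integrable_of_hasCompactSupport (.of_compactSpace f))] with z hz a ha
    exact hπ.eventually_lt_fiberSup_birkhoffAverage_neg hf hz ha
  · simpa only [integral_comp_of_measurePreserving hlam (hint _).aestronglyMeasurable] using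
      hπ.tendsto_maxFiberAverage hS hf.neg

end IsFactorMap

end RegularPoints

theorem stmt4_general {Z Y : Type*} [TopologicalSpace Z] [CompactSpace Z] [T2Space Z]
    [MeasurableSpace Z] [BorelSpace Z] [TopologicalSpace Y] [CompactSpace Y]
    [TopologicalSpace.MetrizableSpace Y] [MeasurableSpace Y] [BorelSpace Y]
    {U : Z → Z} {S : Y → Y} {π : Z → Y} (hπ : IsFactorMap U S π) {f : Z → ℝ} (hf : Continuous f) :
    alphaF U S π f ≤ betaF U π f := by
  rcases isEmpty_or_nonempty Y with hY | hY
  · have hM : IsEmpty (ProbabilityMeasure Y) := ⟨fun ν ↦ hY.elim ν.nonempty.some⟩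
    simp [alphaF, betaF]
  obtain ⟨C, hC⟩ := hf.bounded_above_of_compact_support (.of_compactSpace f)
  obtain ⟨ν₀, hν₀⟩ := invMeas_nonempty hπ.continuous_cod
  refine csSup_le ⟨_, ν₀, hν₀, rfl⟩ ?_
  rintro _ ⟨ν, hν, rfl⟩
  obtain ⟨lam, hlam, hlamν, hint⟩ :=
    hπ.exists_invariant_lift ⟨hπ.continuous_cod.measurable, hν⟩ hf.neg
  calc psi U π f ν ≤ ∫ z, f z ∂lam.toMeasure := psi_le_integral hC hlam hlamν
    _ = -maxFiberAverage U π ν.toMeasure (-f) := by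
      rw [← hint, ← integral_neg]
      simp only [Pi.neg_apply, neg_neg]
    _ ≤ betaF U π f := neg_le.1 (hπ.neg_betaF_le_maxFiberAverage
      ⟨hπ.continuous_dom.measurable, hlam⟩ ⟨hπ.continuous.measurable, hlamν⟩ hf)

/-- for any factor map `π : (Z,U) → (Y,S)` and `f ∈ C(Z)`, `α(f) ≤ β(f)`. -/
theorem stmt4
    {Z Y : Type*}
    [TopologicalSpace Z] [CompactSpace Z] [TopologicalSpace.MetrizableSpace Z]
    [MeasurableSpace Z] [BorelSpace Z]
    [TopologicalSpace Y] [CompactSpace Y] [TopologicalSpace.MetrizableSpace Y]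
    [MeasurableSpace Y] [BorelSpace Y]
    (U : Z ≃ₜ Z) (S : Y ≃ₜ Y) (π : Z → Y)
    (hπcont : Continuous π) (hπsurj : Function.Surjective π)
    (hfactor : ⇑S ∘ π = π ∘ ⇑U)
    (f : Z → ℝ) (hf : Continuous f) :
    alphaF (⇑U) (⇑S) π f ≤ betaF (⇑U) π f := by
  exact stmt4_general
    ⟨U.continuous, S.continuous, hπcont, hπsurj, fun z ↦ (congrFun hfactor z).symm⟩ hf
end
end

section
/- Let (X, T) and (Y, S) be topological dynamical systems and f ∈ C(X × Y). If (X, T) and (Y, S) both have the periodic specification property, then α(f) = γ(f) = δ(f) ≤ β(f). -/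
open MeasureTheory Filter Topology
open scoped ENNReal NNReal

noncomputable section

/-- Birkhoff average `A_k f(x, y) = (1/k) Σ_{j<k} f(T^j x, S^j y)`. -/
def birk2 {X Y : Type*} (T : X → X) (S : Y → Y) (f : X × Y → ℝ) (k : ℕ) (x : X) (y : Y) : ℝ :=
  (k : ℝ)⁻¹ * ∑ j ∈ Finset.range k, f ((Prod.map T S)^[j] (x, y))

/-- `ψ_f(ν) = min { ∫ f dλ : λ ∈ M_{T×S}(X × Y), (π_Y)_* λ = ν }`. -/
def psi2 {X Y : Type*} [MeasurableSpace X] [MeasurableSpace Y]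
    (T : X → X) (S : Y → Y) (f : X × Y → ℝ) (ν : ProbabilityMeasure Y) : ℝ :=
  sInf {r | ∃ lam ∈ invMeas (Prod.map T S), lam.toMeasure.map Prod.snd = ν.toMeasure ∧
    r = ∫ p, f p ∂lam.toMeasure}

/-- `α(f) = sup_{ν ∈ M_S(Y)} ψ_f(ν)`. -/
def alpha2 {X Y : Type*} [MeasurableSpace X] [MeasurableSpace Y]
    (T : X → X) (S : Y → Y) (f : X × Y → ℝ) : ℝ :=
  sSup {r | ∃ ν ∈ invMeas S, r = psi2 T S f ν}

/-- `R_f`: points `(x, y)` whose Birkhoff averages converge. -/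
def reg2 {X Y : Type*} (T : X → X) (S : Y → Y) (f : X × Y → ℝ) : Set (X × Y) :=
  {p | ∃ L : ℝ, Tendsto (fun k : ℕ => birk2 T S f k p.1 p.2) atTop (𝓝 L)}

/-- `β(f) = sup_{y ∈ π_Y(R_f)} inf_{(x,y) ∈ R_f} lim_k A_k f(x, y)`. -/
def beta2 {X Y : Type*} (T : X → X) (S : Y → Y) (f : X × Y → ℝ) : ℝ :=
  sSup {r | ∃ y : Y, (∃ x : X, (x, y) ∈ reg2 T S f) ∧
    r = sInf {L | ∃ x : X, (x, y) ∈ reg2 T S f ∧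
      Tendsto (fun k : ℕ => birk2 T S f k x y) atTop (𝓝 L)}}

/-- `γ(f) = sup_{y ∈ Y} inf_{x ∈ X} limsup_k A_k f(x, y)`. -/
def gamma2 {X Y : Type*} (T : X → X) (S : Y → Y) (f : X × Y → ℝ) : ℝ :=
  ⨆ y : Y, ⨅ x : X, limsup (fun k : ℕ => birk2 T S f k x y) atTop

/-- `δ(f) = limsup_k max_{y ∈ Y} min_{x ∈ X} A_k f(x, y)`. -/
def delta2 {X Y : Type*} (T : X → X) (S : Y → Y) (f : X × Y → ℝ) : ℝ :=
  limsup (fun k : ℕ => ⨆ y : Y, ⨅ x : X, birk2 T S f k x y) atTop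

/-- The invariant probability measures supported on a single closed (periodic) orbit. -/
def Mco {Z : Type*} [MeasurableSpace Z] (U : Z → Z) : Set (ProbabilityMeasure Z) :=
  {μ | ∃ (k : ℕ) (z : Z), 0 < k ∧ U^[k] z = z ∧
    μ.toMeasure = (k : ℝ≥0∞)⁻¹ • ∑ j ∈ Finset.range k, Measure.dirac (U^[j] z)}

/-- `α_per(f)`: as `α(f)`, but with both measures ranging over closed-orbit measures. -/
def alphaPer2 {X Y : Type*} [MeasurableSpace X] [MeasurableSpace Y]
    (T : X → X) (S : Y → Y) (f : X × Y → ℝ) : ℝ :=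
  sSup {r | ∃ ν ∈ Mco S,
    r = sInf {t | ∃ lam ∈ Mco (Prod.map T S), lam.toMeasure.map Prod.snd = ν.toMeasure ∧
      t = ∫ p, f p ∂lam.toMeasure}}

/-- The set of periodic points. -/
def perPts {Z : Type*} (U : Z → Z) : Set Z :=
  {z | ∃ t : ℕ, 0 < t ∧ U^[t] z = z}

/-- `δ_per(f) = limsup_k sup_{y ∈ Per_S(Y)} inf_{x ∈ Per_T(X)} A_k f(x, y)`. -/
def deltaPer2 {X Y : Type*} (T : X → X) (S : Y → Y) (f : X × Y → ℝ) : ℝ :=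
  limsup (fun k : ℕ => sSup {r | ∃ y ∈ perPts S,
    r = sInf {t | ∃ x ∈ perPts T, t = birk2 T S f k x y}}) atTop

/-- The `j`-th power (`j : ℤ`) of a homeomorphism, applied to a point. -/
def zit {X : Type*} [TopologicalSpace X] (T : X ≃ₜ X) (j : ℤ) (x : X) : X :=
  (T.toEquiv ^ j) x

/-- The specification property for `(X, T)` (with respect to the metric of `X`):
for every `η > 0` there is `D = D(η)` such that every `D`-spaced specification
`ξ = (x_i, [a_i, b_i])_{i=1}^n` admits an `η`-tracing point. -/
def SpecProp {X : Type*} [MetricSpace X] (T : X ≃ₜ X) : Prop :=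
  ∀ η : ℝ, 0 < η → ∃ D : ℕ, 0 < D ∧
    ∀ (n : ℕ) (x : Fin (n + 1) → X) (a b : Fin (n + 1) → ℤ),
      (∀ i, a i ≤ b i) →
      (∀ i : Fin n, (D : ℤ) ≤ a i.succ - b i.castSucc) →
      ∃ x' : X, ∀ i : Fin (n + 1), ∀ j : ℤ, a i ≤ j → j ≤ b i →
        dist (zit T j x') (zit T j (x i)) < η

/-- The periodic specification property for `(X, T)`: as `SpecProp`, but the tracing
point can moreover be chosen of period `b_n - a_1 + D`. -/
def PerSpecProp {X : Type*} [MetricSpace X] (T : X ≃ₜ X) : Prop :=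
  ∀ η : ℝ, 0 < η → ∃ D : ℕ, 0 < D ∧
    ∀ (n : ℕ) (x : Fin (n + 1) → X) (a b : Fin (n + 1) → ℤ),
      (∀ i, a i ≤ b i) →
      (∀ i : Fin n, (D : ℤ) ≤ a i.succ - b i.castSucc) →
      ∃ x' : X, (∀ i : Fin (n + 1), ∀ j : ℤ, a i ≤ j → j ≤ b i →
          dist (zit T j x') (zit T j (x i)) < η) ∧
        zit T (b (Fin.last n) - a 0 + (D : ℤ)) x' = x'

/-!
Specification makes the time-`k` value `max_y min_x A_k f`, whose `limsup` is `δ(f)`, attainable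
along whole orbits.

If `c < δ(f)`, pick `y₀` and a long block on which `A_L f(x, y₀) > c` for every `x`. Specification
for `S` gives a point tracing this block of `y₀` again and again, hence a nonempty closed
`S`-invariant `W ⊆ Y` such that `A_k f ≥ c` on `X × W` for all large `k`. This bounds from below
`γ(f)` through any point of `W`, `α(f)` through an invariant measure carried by `W`, all of whose
invariant lifts `λ` satisfy `∫ f dλ = ∫ A_k f dλ ≥ c`, and `β(f)` because some point of the
compact invariant set `X × W` has convergent averages: by compactness there is one whose averages
converge to the minimal value.

If `c > δ(f)`, every long block of any `y` has a partner in `X` with average below `c`.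
Specification for `T` glues partners of successive blocks, so `γ(f) ≤ c`. Choosing partners
measurably and averaging the graph measures over time (Krylov–Bogoliubov) lifts any
`ν ∈ M_S(Y)` to an invariant measure with `∫ f ≤ c`, so `α(f) ≤ c`.
-/

section BoundedFamilies

variable {ι : Type*} {u : ι → ℝ} {C : ℝ}

lemma bddBelow_range_of_abs_le (h : ∀ i, |u i| ≤ C) : BddBelow (Set.range u) :=
  ⟨-C, Set.forall_mem_range.2 fun i => neg_le_of_abs_le (h i)⟩

lemma bddAbove_range_of_abs_le (h : ∀ i, |u i| ≤ C) : BddAbove (Set.range u) :=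
  ⟨C, Set.forall_mem_range.2 fun i => le_of_abs_le (h i)⟩

lemma abs_ciInf_le [Nonempty ι] (h : ∀ i, |u i| ≤ C) : |⨅ i, u i| ≤ C :=
  abs_le.2 ⟨le_ciInf fun i => neg_le_of_abs_le (h i),
    ciInf_le_of_le (bddBelow_range_of_abs_le h) (Classical.arbitrary ι) (le_of_abs_le (h _))⟩

lemma abs_ciSup_le [Nonempty ι] (h : ∀ i, |u i| ≤ C) : |⨆ i, u i| ≤ C :=
  abs_le.2 ⟨le_ciSup_of_le (bddAbove_range_of_abs_le h) (Classical.arbitrary ι)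
    (neg_le_of_abs_le (h _)), ciSup_le fun i => le_of_abs_le (h i)⟩

variable {l : Filter ι}

lemma isBoundedUnder_le_of_abs_le (h : ∀ i, |u i| ≤ C) : l.IsBoundedUnder (· ≤ ·) u :=
  isBoundedUnder_of ⟨C, fun i => le_of_abs_le (h i)⟩

lemma isCoboundedUnder_le_of_abs_le [l.NeBot] (h : ∀ i, |u i| ≤ C) :
    l.IsCoboundedUnder (· ≤ ·) u :=
  IsBoundedUnder.isCoboundedUnder_le (isBoundedUnder_of ⟨-C, fun i => neg_le_of_abs_le (h i)⟩)

lemma abs_limsup_le [l.NeBot] (h : ∀ i, |u i| ≤ C) : |limsup u l| ≤ C :=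
  abs_le.2 ⟨le_limsup_of_frequently_le (Frequently.of_forall fun i => neg_le_of_abs_le (h i))
      (isBoundedUnder_le_of_abs_le h),
    limsup_le_of_le (isCoboundedUnder_le_of_abs_le h)
      (Eventually.of_forall fun i => le_of_abs_le (h i))⟩

end BoundedFamilies

section BirkhoffAverages

variable {Z : Type*} {R : Z → Z} {f : Z → ℝ} {C c c' ε : ℝ} {n L : ℕ} {E : Set Z}

lemma natCast_mul_birkhoffAverage (R : Z → Z) (f : Z → ℝ) (k : ℕ) (z : Z) :
    k * birkhoffAverage ℝ R f k z = birkhoffSum R f k z := by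
  rcases eq_or_ne k 0 with rfl | hk
  · simp
  · rw [birkhoffAverage, smul_eq_mul, mul_inv_cancel_left₀ (Nat.cast_ne_zero.2 hk)]

lemma abs_birkhoffSum_le (hC : ∀ z, |f z| ≤ C) (k : ℕ) (z : Z) :
    |birkhoffSum R f k z| ≤ k * C := by
  refine (Finset.abs_sum_le_sum_abs _ _).trans ?_
  simpa using Finset.sum_le_card_nsmul (Finset.range k) _ C fun j _ => hC (R^[j] z)

lemma abs_birkhoffAverage_le_s17 (hC : ∀ z, |f z| ≤ C) (k : ℕ) (z : Z) :
    |birkhoffAverage ℝ R f k z| ≤ C := by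
  rcases k.eq_zero_or_pos with rfl | hk
  · simpa using (abs_nonneg _).trans (hC z)
  · rw [birkhoffAverage, smul_eq_mul, abs_mul, abs_inv, Nat.abs_cast,
      inv_mul_le_iff₀ (Nat.cast_pos.2 hk)]
    exact abs_birkhoffSum_le hC k z

lemma le_birkhoffSum_of_returns (hC : ∀ z, |f z| ≤ C)
    (hE : ∀ z ∈ E, ∃ k, 0 < k ∧ k ≤ n ∧ c ≤ birkhoffAverage ℝ R f k z ∧ R^[k] z ∈ E)
    {z : Z} (hz : z ∈ E) (N : ℕ) :
    N * c - n * (C + |c|) ≤ birkhoffSum R f N z := by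
  induction N using Nat.strong_induction_on generalizing z with
  | _ N ih =>
  obtain ⟨k, hk, hkn, hkc, hkE⟩ := hE z hz
  rcases lt_or_ge N k with hNk | hkN
  · have hC0 : 0 ≤ C := (abs_nonneg _).trans (hC z)
    have hNn : (N : ℝ) * (C + |c|) ≤ n * (C + |c|) := by gcongr; omega
    have hNc : (N : ℝ) * c ≤ N * |c| := by gcongr; exact le_abs_self c
    linarith [neg_le_of_abs_le (abs_birkhoffSum_le (R := R) hC N z)]
  · obtain ⟨M, rfl⟩ := Nat.exists_eq_add_of_le hkN
    have hblock : (k : ℝ) * c ≤ birkhoffSum R f k z := by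
      rw [← natCast_mul_birkhoffAverage]
      gcongr
    rw [birkhoffSum_add, Nat.cast_add]
    linarith [ih M (by omega) hkE]

lemma eventually_le_birkhoffAverage_of_returns (hC : ∀ z, |f z| ≤ C) (hc : c' < c)
    (hE : ∀ z ∈ E, ∃ k, 0 < k ∧ k ≤ n ∧ c ≤ birkhoffAverage ℝ R f k z ∧ R^[k] z ∈ E) :
    ∀ᶠ N in atTop, ∀ z, (∃ s ≤ n, R^[s] z ∈ E) → c' ≤ birkhoffAverage ℝ R f N z := by
  have hlarge : ∀ᶠ N : ℕ in atTop, n * (C + |c|) + 2 * (n * C) ≤ N * (c - c') :=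
    (tendsto_natCast_atTop_atTop.atTop_mul_const (sub_pos.2 hc)).eventually_ge_atTop _
  filter_upwards [hlarge, eventually_gt_atTop 0] with N hN hN0 z ⟨s, hs, hsE⟩
  have hsum := le_birkhoffSum_of_returns hC hE hsE N
  have hsplit : birkhoffSum R f N z + birkhoffSum R f s (R^[N] z) =
      birkhoffSum R f s z + birkhoffSum R f N (R^[s] z) := by
    rw [← birkhoffSum_add, ← birkhoffSum_add, add_comm]
  have hsC : (s : ℝ) * C ≤ n * C := by
    have hC0 : 0 ≤ C := (abs_nonneg _).trans (hC z)
    gcongr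
  have hbefore := neg_le_of_abs_le (abs_birkhoffSum_le (R := R) hC s z)
  have hafter := le_of_abs_le (abs_birkhoffSum_le (R := R) hC s (R^[N] z))
  refine le_of_mul_le_mul_left ?_ (Nat.cast_pos.2 hN0 : (0 : ℝ) < N)
  rw [natCast_mul_birkhoffAverage]
  linarith

lemma eventually_birkhoffAverage_le_of_returns (hC : ∀ z, |f z| ≤ C) (hc : c < c')
    (hE : ∀ z ∈ E, ∃ k, 0 < k ∧ k ≤ n ∧ birkhoffAverage ℝ R f k z ≤ c ∧ R^[k] z ∈ E) :
    ∀ᶠ N in atTop, ∀ z, (∃ s ≤ n, R^[s] z ∈ E) → birkhoffAverage ℝ R f N z ≤ c' := by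
  have hneg : ∀ k z, birkhoffAverage ℝ R (-f) k z = -birkhoffAverage ℝ R f k z := fun k z => by
    rw [birkhoffAverage_neg, Pi.neg_apply, Pi.neg_apply]
  simpa only [hneg, neg_le_neg_iff] using
    eventually_le_birkhoffAverage_of_returns (R := R) (f := -f) (E := E) (n := n) (C := C)
      (fun z => by simpa using hC z) (neg_lt_neg hc) (by simpa only [hneg, neg_le_neg_iff] using hE)

lemma abs_birkhoffAverage_add_sub_le (hC : ∀ z, |f z| ≤ C) (hL : 0 < L) (D : ℕ) (z : Z) :
    |birkhoffAverage ℝ R f (L + D) z - birkhoffAverage ℝ R f L z| ≤ 2 * D * C / L := by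
  have : (0 : ℝ) < L := Nat.cast_pos.2 hL
  have hC0 : 0 ≤ C := (abs_nonneg _).trans (hC z)
  set a := birkhoffAverage ℝ R f L z
  set b := birkhoffAverage ℝ R f D (R^[L] z)
  have hdiff : birkhoffAverage ℝ R f (L + D) z - a = D * (b - a) / (L + D : ℝ) := by
    have hsum := natCast_mul_birkhoffAverage R f (L + D) z
    rw [birkhoffSum_add, ← natCast_mul_birkhoffAverage, ← natCast_mul_birkhoffAverage,
      Nat.cast_add] at hsum
    rw [eq_div_iff (by positivity)]
    linarith
  have hab : |b - a| ≤ C + C :=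
    (abs_sub _ _).trans (add_le_add (abs_birkhoffAverage_le_s17 hC _ _) (abs_birkhoffAverage_le_s17 hC _ _))
  calc |birkhoffAverage ℝ R f (L + D) z - a| = D * |b - a| / (L + D : ℝ) := by
        rw [hdiff, abs_div, abs_mul, Nat.abs_cast, abs_of_pos (by positivity : (0 : ℝ) < L + D)]
    _ ≤ D * (C + C) / L := by gcongr; linarith [(Nat.cast_nonneg D : (0 : ℝ) ≤ D)]
    _ = 2 * D * C / L := by ring

lemma abs_birkhoffAverage_add_sub_le_of_shadow (hC : ∀ z, |f z| ≤ C) (hL : 0 < L) (D : ℕ)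
    {z w : Z} (hzw : ∀ j < L, |f (R^[j] z) - f (R^[j] w)| ≤ ε) :
    |birkhoffAverage ℝ R f (L + D) z - birkhoffAverage ℝ R f L w| ≤ 2 * D * C / L + ε := by
  refine (abs_sub_le _ (birkhoffAverage ℝ R f L z) _).trans
    (add_le_add (abs_birkhoffAverage_add_sub_le hC hL D z) ?_)
  refine (dist_birkhoffAverage_birkhoffAverage_le ℝ R f L z w).trans ?_
  rw [div_le_iff₀ (Nat.cast_pos.2 hL), mul_comm]
  simpa [Real.dist_eq] using Finset.sum_le_card_nsmul (Finset.range L) _ ε fun j hj =>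
    hzw j (Finset.mem_range.1 hj)

lemma birkhoffAverage_comp_of_semiconj_s17 {W : Type*} {S : W → W} {π : Z → W}
    (hπ : Function.Semiconj π R S) (g : W → ℝ) (k : ℕ) (z : Z) :
    birkhoffAverage ℝ R (g ∘ π) k z = birkhoffAverage ℝ S g k (π z) := by
  simp only [birkhoffAverage, birkhoffSum, Function.comp_apply, (hπ.iterate_right _).eq]

end BirkhoffAverages

section CompactSystems

variable {Z : Type*} [TopologicalSpace Z] {R : Z → Z} {f : Z → ℝ}

lemma exists_abs_le_of_continuous [CompactSpace Z] (hf : Continuous f) : ∃ C, ∀ z, |f z| ≤ C := by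
  obtain ⟨C, hC⟩ := isCompact_univ.exists_bound_of_continuousOn hf.continuousOn
  exact ⟨C, fun z => hC z (Set.mem_univ z)⟩

lemma continuous_birkhoffAverage_s17 (hR : Continuous R) (hf : Continuous f) (k : ℕ) :
    Continuous (birkhoffAverage ℝ R f k) :=
  (show Continuous (birkhoffSum R f k) from
    continuous_finsetSum _ fun j _ => hf.comp (hR.iterate j)).const_smul (k : ℝ)⁻¹

/-- Otherwise, by compactness, every point of `E` has an average `> m + 1 / (n + 1)` over one of
its first `n` times, for a single `n`; concatenating such blocks contradicts `hm`. -/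
lemma exists_forall_birkhoffAverage_le {E : Set Z} {C m : ℝ} (hR : Continuous R)
    (hf : Continuous f) (hC : ∀ z, |f z| ≤ C) (hE : IsCompact E) (hRE : Set.MapsTo R E E)
    (hm : ∀ c > m, ¬ ∀ᶠ k in atTop, ∀ z ∈ E, c ≤ birkhoffAverage ℝ R f k z) :
    ∃ z ∈ E, ∀ k > 0, birkhoffAverage ℝ R f k z ≤ m := by
  by_contra! hgt
  let U : ℕ → Set Z := fun n => ⋃ k ∈ Set.Ioc 0 n,
    {z | m + 1 / ((n : ℝ) + 1) < birkhoffAverage ℝ R f k z}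
  have hU : ∀ n, IsOpen (U n) := fun n => isOpen_biUnion fun k _ =>
    isOpen_lt continuous_const (continuous_birkhoffAverage_s17 hR hf k)
  have hmono : Monotone U := fun n n' hn => by
    refine Set.biUnion_mono (Set.Ioc_subset_Ioc_right hn) fun k _ z hz => ?_
    exact (by gcongr : m + 1 / ((n' : ℝ) + 1) ≤ m + 1 / ((n : ℝ) + 1)).trans_lt hz
  have hcover : E ⊆ ⋃ n, U n := fun z hz => by
    obtain ⟨k, hk, hkm⟩ := hgt z hz
    obtain ⟨n, hn⟩ := exists_nat_one_div_lt (sub_pos.2 hkm)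
    have hnk : 1 / (((max n k : ℕ) : ℝ) + 1) ≤ 1 / ((n : ℝ) + 1) := by
      gcongr
      exact le_max_left n k
    refine Set.mem_iUnion.2 ⟨max n k, Set.mem_biUnion ⟨hk, le_max_right n k⟩ ?_⟩
    rw [Set.mem_ofPred_eq]
    linarith
  obtain ⟨n, hn⟩ := hE.elim_directed_cover U hU hcover hmono.directed_le
  have hpos : 0 < 1 / ((n : ℝ) + 1) := Nat.one_div_pos_of_nat
  refine hm (m + 1 / (n + 1) / 2) (by linarith) ?_
  filter_upwards [eventually_le_birkhoffAverage_of_returns (n := n) (E := E) hC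
    (by linarith : m + 1 / ((n : ℝ) + 1) / 2 < m + 1 / (n + 1)) fun z hz => by
      obtain ⟨k, ⟨hk, hkn⟩, hkz⟩ := Set.mem_iUnion₂.1 (hn hz)
      exact ⟨k, hk, hkn, le_of_lt hkz, hRE.iterate k hz⟩] with N hN z hz
  exact hN z ⟨0, n.zero_le, hz⟩

lemma exists_tendsto_birkhoffAverage [CompactSpace Z] {E : Set Z} (hR : Continuous R)
    (hf : Continuous f) (hE : IsClosed E) (hne : E.Nonempty) (hRE : Set.MapsTo R E E) :
    ∃ z ∈ E, ∃ m, Tendsto (fun k => birkhoffAverage ℝ R f k z) atTop (𝓝 m) := by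
  obtain ⟨C, hC⟩ := exists_abs_le_of_continuous hf
  let G : Set ℝ := {c | ∀ᶠ k in atTop, ∀ z ∈ E, c ≤ birkhoffAverage ℝ R f k z}
  have hG : G.Nonempty :=
    ⟨-C, Eventually.of_forall fun k z _ => neg_le_of_abs_le (abs_birkhoffAverage_le_s17 hC k z)⟩
  have hbdd : BddAbove G := by
    obtain ⟨z, hz⟩ := hne
    refine ⟨C, fun c hc => ?_⟩
    obtain ⟨k, hk⟩ := hc.exists
    exact (hk z hz).trans (le_of_abs_le (abs_birkhoffAverage_le_s17 hC k z))
  obtain ⟨z, hz, hle⟩ := exists_forall_birkhoffAverage_le hR hf hC hE.isCompact hRE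
    fun c (hc : sSup G < c) hcG => (le_csSup hbdd hcG).not_gt hc
  refine ⟨z, hz, sSup G, tendsto_order.2 ⟨fun c hc => ?_, fun c hc => ?_⟩⟩
  · obtain ⟨c', hc', hcc'⟩ := exists_lt_of_lt_csSup hG hc
    filter_upwards [hc'] with k hk using hcc'.trans_le (hk z hz)
  · filter_upwards [eventually_gt_atTop 0] with k hk using (hle k hk).trans_lt hc

lemma exists_abs_birkhoffAverage_add_sub_le_of_dist_le {Z : Type*} [PseudoMetricSpace Z]
    [CompactSpace Z] (R : Z → Z) {f : Z → ℝ} (hf : Continuous f) {ε : ℝ} (hε : 0 < ε) :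
    ∃ η > 0, ∀ D : ℕ, ∀ᶠ L in atTop, ∀ z w, (∀ j < L, dist (R^[j] z) (R^[j] w) ≤ η) →
      |birkhoffAverage ℝ R f (L + D) z - birkhoffAverage ℝ R f L w| ≤ ε := by
  obtain ⟨C, hC⟩ := exists_abs_le_of_continuous hf
  obtain ⟨η, hη, hfη⟩ := Metric.uniformContinuous_iff.1
    (CompactSpace.uniformContinuous_of_continuous hf) (ε / 2) (half_pos hε)
  refine ⟨η / 2, half_pos hη, fun D => ?_⟩
  filter_upwards [(tendsto_const_div_atTop_nhds_zero_nat (2 * D * C)).eventually_lt_const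
    (half_pos hε), eventually_gt_atTop 0] with L hL hL0 z w hzw
  have hshadow : ∀ j < L, |f (R^[j] z) - f (R^[j] w)| ≤ ε / 2 := fun j hj =>
    (hfη ((hzw j hj).trans_lt (half_lt_self hη))).le
  linarith [abs_birkhoffAverage_add_sub_le_of_shadow hC hL0 D hshadow]

end CompactSystems

section Specification

variable {X : Type*}

lemma zit_natCast [TopologicalSpace X] (T : X ≃ₜ X) (n : ℕ) (x : X) : zit T n x = T^[n] x := by
  rw [zit, zpow_natCast, ← Equiv.Perm.iterate_eq_pow]
  rfl

lemma zit_add [TopologicalSpace X] (T : X ≃ₜ X) (m n : ℤ) (x : X) :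
    zit T (m + n) x = zit T m (zit T n x) := by
  simp [zit, zpow_add]

variable [MetricSpace X] {T : X ≃ₜ X} {η : ℝ}

lemma PerSpecProp.specProp (h : PerSpecProp T) : SpecProp T := fun η hη =>
  let ⟨D, hD, H⟩ := h η hη
  ⟨D, hD, fun n x a b hab hgap => (H n x a b hab hgap).imp fun _ => And.left⟩

lemma SpecProp.exists_tracing_blocks (h : SpecProp T) (hη : 0 < η) :
    ∃ D : ℕ, ∀ L > 0, ∀ (n : ℕ) (z : ℕ → X), ∃ x,
      ∀ i ≤ n, ∀ j < L, dist (T^[j] (T^[i * (L + D)] x)) (T^[j] (z i)) < η := by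
  obtain ⟨D, -, H⟩ := h η hη
  refine ⟨D, fun L hL n z => ?_⟩
  obtain ⟨x, hx⟩ := H n (fun i => zit T (-((i * (L + D) : ℕ) : ℤ)) (z i))
    (fun i => ((i * (L + D) : ℕ) : ℤ)) (fun i => ((i * (L + D) + (L - 1) : ℕ) : ℤ))
    (fun i => by omega) (fun i => by
      simp only [Fin.val_succ, Fin.val_castSucc, add_mul]
      omega)
  refine ⟨x, fun i hi j hj => ?_⟩
  have hij := hx ⟨i, by omega⟩ ((j + i * (L + D) : ℕ) : ℤ) (by push_cast; omega)
    (by dsimp only; omega)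
  rw [zit_natCast, Function.iterate_add_apply, ← zit_add] at hij
  have hcancel : ((j + i * (L + D) : ℕ) : ℤ) + -((i * (L + D) : ℕ) : ℤ) = (j : ℤ) := by omega
  simpa only [hcancel, zit_natCast] using hij

lemma SpecProp.exists_tracing_seq [CompactSpace X] (h : SpecProp T) (hη : 0 < η) :
    ∃ D : ℕ, ∀ L > 0, ∀ z : ℕ → X, ∃ x,
      ∀ i, ∀ j < L, dist (T^[j] (T^[i * (L + D)] x)) (T^[j] (z i)) ≤ η := by
  obtain ⟨D, hD⟩ := h.exists_tracing_blocks hη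
  refine ⟨D, fun L hL z => ?_⟩
  let K : ℕ → Set X := fun n =>
    {x | ∀ i ≤ n, ∀ j < L, dist (T^[j] (T^[i * (L + D)] x)) (T^[j] (z i)) ≤ η}
  have hK : ∀ n, IsClosed (K n) := fun n => by
    simp only [K, Set.ofPred_forall]
    refine isClosed_iInter fun i => isClosed_iInter fun _ => isClosed_iInter fun j =>
      isClosed_iInter fun _ => isClosed_le ?_ continuous_const
    exact ((T.continuous.iterate j).comp (T.continuous.iterate _)).dist continuous_const
  obtain ⟨x, hx⟩ := IsCompact.nonempty_iInter_of_sequence_nonempty_isCompact_isClosed K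
    (fun n x hx i hi => hx i (Nat.le_succ_of_le hi))
    (fun n => (hD L hL n z).imp fun x hx i hi j hj => (hx i hi j hj).le)
    (hK 0).isCompact hK
  exact ⟨x, fun i => Set.mem_iInter.1 hx i i le_rfl⟩

end Specification

section KrylovBogoliubov

/-- The Cesàro mean of the first `k` push-forwards of `μ` under `R`, whose limit points as
`k → ∞` are the invariant measures given by the Krylov–Bogoliubov argument. It is junk (the zero
measure) for `k = 0`. -/
def cesaroMeasure {Z : Type*} [MeasurableSpace Z] (R : Z → Z) (μ : Measure Z) (k : ℕ) :
    Measure Z :=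
  (k : ℝ≥0∞)⁻¹ • ∑ j ∈ Finset.range k, μ.map R^[j]

lemma isProbabilityMeasure_cesaroMeasure {Z : Type*} [MeasurableSpace Z] {R : Z → Z}
    (hR : Measurable R) (μ : Measure Z) [IsProbabilityMeasure μ] {k : ℕ} (hk : 0 < k) :
    IsProbabilityMeasure (cesaroMeasure R μ k) := by
  have hmap : ∀ j, μ.map R^[j] Set.univ = 1 := fun j => by
    rw [Measure.map_apply (hR.iterate j) MeasurableSet.univ, Set.preimage_univ, measure_univ]
  refine ⟨?_⟩
  simp only [cesaroMeasure, Measure.smul_apply, Measure.coe_finsetSum, Finset.sum_apply, hmap,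
    Finset.sum_const, Finset.card_range, smul_eq_mul, nsmul_eq_mul, mul_one]
  exact ENNReal.inv_mul_cancel (Nat.cast_ne_zero.2 hk.ne') (ENNReal.natCast_ne_top k)

lemma measure_eq_of_forall_integral_eq {Z : Type*} [TopologicalSpace Z] [HasOuterApproxClosed Z]
    [MeasurableSpace Z] [BorelSpace Z] {μ ν : Measure Z} [IsFiniteMeasure μ] [IsFiniteMeasure ν]
    (h : ∀ g : Z → ℝ, Continuous g → ∫ z, g z ∂μ = ∫ z, g z ∂ν) : μ = ν :=
  ext_of_forall_integral_eq_of_IsFiniteMeasure fun g => h g g.continuous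

lemma map_eq_of_forall_integral_comp_eq {Z W : Type*} [TopologicalSpace Z] [MeasurableSpace Z]
    [BorelSpace Z] [TopologicalSpace W] [HasOuterApproxClosed W] [MeasurableSpace W] [BorelSpace W]
    {π : Z → W} (hπ : Continuous π) {μ : Measure Z} {ν : Measure W} [IsFiniteMeasure μ]
    [IsFiniteMeasure ν]
    (h : ∀ g : W → ℝ, Continuous g → ∫ z, (g ∘ π) z ∂μ = ∫ w, g w ∂ν) : μ.map π = ν :=
  measure_eq_of_forall_integral_eq fun g hg =>
    (integral_map hπ.measurable.aemeasurable hg.aestronglyMeasurable).trans (h g hg)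

variable {Z : Type*} [MetricSpace Z] [CompactSpace Z] [MeasurableSpace Z] [BorelSpace Z]
  {R : Z → Z}

lemma integrable_of_continuous {h : Z → ℝ} (hh : Continuous h) (μ : Measure Z)
    [IsFiniteMeasure μ] : Integrable h μ :=
  hh.integrable_of_hasCompactSupport (HasCompactSupport.of_compactSpace h)

lemma integral_birkhoffAverage_s17 (hR : Continuous R) (μ : Measure Z) [IsFiniteMeasure μ]
    {h : Z → ℝ} (hh : Continuous h) (k : ℕ) :
    ∫ z, birkhoffAverage ℝ R h k z ∂μ =
      (k : ℝ)⁻¹ * ∑ j ∈ Finset.range k, ∫ z, h (R^[j] z) ∂μ := by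
  simp only [birkhoffAverage, birkhoffSum, smul_eq_mul]
  rw [integral_const_mul, integral_finsetSum (f := fun j z => h (R^[j] z)) _ fun j _ =>
    integrable_of_continuous (hh.comp (hR.iterate j)) μ]

lemma integral_cesaroMeasure (hR : Continuous R) (μ : Measure Z) [IsFiniteMeasure μ]
    {h : Z → ℝ} (hh : Continuous h) (k : ℕ) :
    ∫ z, h z ∂(cesaroMeasure R μ k) = ∫ z, birkhoffAverage ℝ R h k z ∂μ := by
  rw [integral_birkhoffAverage_s17 hR μ hh, cesaroMeasure, integral_smul_measure,
    integral_finsetSum_measure fun j _ => integrable_of_continuous hh _, ENNReal.toReal_inv,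
    ENNReal.toReal_natCast, smul_eq_mul]
  congr 1
  exact Finset.sum_congr rfl fun j _ =>
    integral_map (hR.measurable.iterate j).aemeasurable hh.aestronglyMeasurable

lemma integral_birkhoffAverage_of_mem_invMeas (hR : Continuous R) {μ : ProbabilityMeasure Z}
    (hμ : μ ∈ invMeas R) {h : Z → ℝ} (hh : Continuous h) {k : ℕ} (hk : 0 < k) :
    ∫ z, birkhoffAverage ℝ R h k z ∂μ.toMeasure = ∫ z, h z ∂μ.toMeasure := by
  have hmp : MeasurePreserving R μ.toMeasure μ.toMeasure := ⟨hR.measurable, hμ⟩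
  have hj : ∀ j, ∫ z, h (R^[j] z) ∂μ.toMeasure = ∫ z, h z ∂μ.toMeasure := fun j => by
    rw [← integral_map (hR.measurable.iterate j).aemeasurable hh.aestronglyMeasurable,
      (hmp.iterate j).map_eq]
  simp only [integral_birkhoffAverage_s17 hR _ hh, hj, Finset.sum_const, Finset.card_range,
    nsmul_eq_mul]
  exact inv_mul_cancel_left₀ (Nat.cast_ne_zero.2 hk.ne') _

lemma abs_integral_birkhoffAverage_comp_sub_le (hR : Continuous R) (μ : Measure Z)
    [IsProbabilityMeasure μ] {h : Z → ℝ} (hh : Continuous h) {C : ℝ} (hC : ∀ z, |h z| ≤ C)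
    (k : ℕ) :
    |∫ z, birkhoffAverage ℝ R (h ∘ R) k z ∂μ - ∫ z, birkhoffAverage ℝ R h k z ∂μ| ≤
      2 * C / k := by
  rw [← integral_sub (integrable_of_continuous (continuous_birkhoffAverage_s17 hR (hh.comp hR) k) μ)
    (integrable_of_continuous (continuous_birkhoffAverage_s17 hR hh k) μ), ← Real.norm_eq_abs]
  refine (norm_integral_le_of_norm_le_const (Eventually.of_forall fun z => ?_)).trans_eq
    (by rw [probReal_univ, mul_one])
  rw [birkhoffAverage_comp_of_semiconj_s17 (Function.Commute.refl R), ← dist_eq_norm,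
    dist_birkhoffAverage_apply_birkhoffAverage]
  gcongr
  rw [Real.dist_eq, two_mul]
  exact (abs_sub _ _).trans (add_le_add (hC _) (hC _))

lemma mem_invMeas_of_tendsto_s17 (hR : Continuous R) {m : ℕ → Measure Z}
    [∀ n, IsProbabilityMeasure (m n)] {k : ℕ → ℕ} (hk : Tendsto k atTop atTop)
    {μ : ProbabilityMeasure Z} (hμ : ∀ h : Z → ℝ, Continuous h →
      Tendsto (fun n => ∫ z, birkhoffAverage ℝ R h (k n) z ∂(m n)) atTop
        (𝓝 (∫ z, h z ∂μ.toMeasure))) : μ ∈ invMeas R := by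
  refine map_eq_of_forall_integral_comp_eq hR fun h hh => ?_
  obtain ⟨C, hC⟩ := exists_abs_le_of_continuous hh
  refine sub_eq_zero.1 (tendsto_nhds_unique ((hμ _ (hh.comp hR)).sub (hμ _ hh)) ?_)
  exact squeeze_zero_norm
    (fun n => abs_integral_birkhoffAverage_comp_sub_le hR (m n) hh hC (k n))
    ((tendsto_const_div_atTop_nhds_zero_nat (2 * C)).comp hk)

lemma exists_mem_invMeas_tendsto (hR : Continuous R) (m : ℕ → Measure Z)
    [∀ k, IsProbabilityMeasure (m k)] :
    ∃ μ ∈ invMeas R, ∃ φ : ℕ → ℕ, StrictMono φ ∧ ∀ h : Z → ℝ, Continuous h →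
      Tendsto (fun n => ∫ z, birkhoffAverage ℝ R h (φ n) z ∂(m (φ n))) atTop
        (𝓝 (∫ z, h z ∂μ.toMeasure)) := by
  let u : ℕ → ProbabilityMeasure Z := fun k => ⟨cesaroMeasure R (m (k + 1)) (k + 1),
    isProbabilityMeasure_cesaroMeasure hR.measurable _ k.succ_pos⟩
  obtain ⟨μ, φ, hφ, hμ⟩ := SeqCompactSpace.tendsto_subseq u
  have hlim : ∀ h : Z → ℝ, Continuous h →
      Tendsto (fun n => ∫ z, birkhoffAverage ℝ R h (φ n + 1) z ∂(m (φ n + 1))) atTop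
        (𝓝 (∫ z, h z ∂μ.toMeasure)) := fun h hh =>
    (((ProbabilityMeasure.continuous_integral_continuousMap (⟨h, hh⟩ : C(Z, ℝ))).tendsto μ).comp
      hμ).congr fun n => integral_cesaroMeasure hR _ hh _
  have hφ' : StrictMono fun n => φ n + 1 := hφ.add_const 1
  exact ⟨μ, mem_invMeas_of_tendsto_s17 hR hφ'.tendsto_atTop hlim, _, hφ', hlim⟩

lemma map_eq_of_tendsto_of_semiconj {V : Type*} [TopologicalSpace V] [MeasurableSpace V]
    [BorelSpace V] {Q : V → V} {π : V → Z} (hR : Continuous R) (hπ : Continuous π)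
    (hQR : Function.Semiconj π Q R) {ν : ProbabilityMeasure Z} (hν : ν ∈ invMeas R)
    {m : ℕ → Measure V} (hm : ∀ n, (m n).map π = ν.toMeasure) {k : ℕ → ℕ}
    (hk : Tendsto k atTop atTop) {μ : ProbabilityMeasure V}
    (hμ : ∀ h : V → ℝ, Continuous h →
      Tendsto (fun n => ∫ v, birkhoffAverage ℝ Q h (k n) v ∂(m n)) atTop
        (𝓝 (∫ v, h v ∂μ.toMeasure))) : μ.toMeasure.map π = ν.toMeasure := by
  refine map_eq_of_forall_integral_comp_eq hπ fun g hg => ?_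
  refine tendsto_nhds_unique (hμ _ (hg.comp hπ)) (tendsto_const_nhds.congr' ?_)
  filter_upwards [hk.eventually_gt_atTop 0] with n hn
  simp only [birkhoffAverage_comp_of_semiconj_s17 hQR]
  rw [← integral_birkhoffAverage_of_mem_invMeas hR hν hg hn, ← hm n]
  exact integral_map hπ.measurable.aemeasurable
    (continuous_birkhoffAverage_s17 hR hg _).aestronglyMeasurable

lemma exists_mem_invMeas_ae_mem (hR : Continuous R) {E : Set Z} (hE : IsClosed E)
    (hne : E.Nonempty) (hRE : Set.MapsTo R E E) :
    ∃ μ ∈ invMeas R, ∀ᵐ z ∂μ.toMeasure, z ∈ E := by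
  obtain ⟨z₀, hz₀⟩ := hne
  obtain ⟨μ, hμ, φ, -, hlim⟩ := exists_mem_invMeas_tendsto hR fun _ => Measure.dirac z₀
  have hcont : Continuous fun z => Metric.infDist z E := Metric.continuous_infDist_pt E
  have hzero : ∀ k, birkhoffAverage ℝ R (fun z => Metric.infDist z E) k z₀ = 0 := fun k => by
    rw [birkhoffAverage, birkhoffSum, Finset.sum_eq_zero fun j _ =>
      Metric.infDist_zero_of_mem (hRE.iterate j hz₀), smul_zero]
  have hint : ∫ z, Metric.infDist z E ∂μ.toMeasure = 0 :=
    tendsto_nhds_unique (hlim _ hcont) (tendsto_const_nhds.congr fun n => by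
      rw [integral_dirac, hzero])
  refine ⟨μ, hμ, ?_⟩
  filter_upwards [(integral_eq_zero_iff_of_nonneg (fun _ => Metric.infDist_nonneg)
    (integrable_of_continuous hcont _)).1 hint] with z hz
  exact (hE.mem_iff_infDist_zero ⟨z₀, hz₀⟩).2 hz

end KrylovBogoliubov

lemma exists_measurable_selection_lt {X Y : Type*}
    [TopologicalSpace X] [TopologicalSpace.SeparableSpace X] [Nonempty X] [MeasurableSpace X]
    [TopologicalSpace Y] [MeasurableSpace Y] [OpensMeasurableSpace Y]
    {g : X × Y → ℝ} (hg : Continuous g) (c : ℝ) :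
    ∃ s : Y → X, Measurable s ∧ ∀ y, (∃ x, g (x, y) < c) → g (s y, y) < c := by
  classical
  let d := TopologicalSpace.denseSeq X
  have hopen : ∀ x, IsOpen {y | g (x, y) < c} := fun x =>
    isOpen_lt (hg.comp (Continuous.prodMk_right x)) continuous_const
  have hsome : IsOpen {y | ∃ x, g (x, y) < c} := by
    simpa only [Set.ofPred_exists] using isOpen_iUnion hopen
  have hd : ∀ y, ∃ n, g (d n, y) < c ∨ ¬ ∃ x, g (x, y) < c := fun y => by
    by_cases hy : ∃ x, g (x, y) < c
    · obtain ⟨n, hn⟩ := (TopologicalSpace.denseRange_denseSeq X).exists_mem_open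
        (isOpen_lt (hg.comp (Continuous.prodMk_left y)) continuous_const) hy
      exact ⟨n, Or.inl hn⟩
    · exact ⟨0, Or.inr hy⟩
  refine ⟨fun y => d (Nat.find (hd y)), Measurable.find (fun n => measurable_const)
    (fun n => ?_) hd, fun y hy => (Nat.find_spec (hd y)).resolve_right (not_not_intro hy)⟩
  exact (hopen (d n)).measurableSet.union hsome.measurableSet.compl

section Delta

variable {X Y : Type*} {T : X → X} {S : Y → Y} {f : X × Y → ℝ} {C c : ℝ}

lemma abs_birk2_le (hC : ∀ p, |f p| ≤ C) (k : ℕ) (x : X) (y : Y) : |birk2 T S f k x y| ≤ C :=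
  abs_birkhoffAverage_le_s17 hC k (x, y)

lemma abs_limsup_birk2_le (hC : ∀ p, |f p| ≤ C) (x : X) (y : Y) :
    |limsup (fun k => birk2 T S f k x y) atTop| ≤ C :=
  abs_limsup_le fun k => abs_birk2_le hC k x y

variable [Nonempty X]

lemma abs_iInf_birk2_le (hC : ∀ p, |f p| ≤ C) (k : ℕ) (y : Y) :
    |⨅ x, birk2 T S f k x y| ≤ C :=
  abs_ciInf_le fun x => abs_birk2_le hC k x y

variable [Nonempty Y]

lemma abs_iSup_iInf_birk2_le (hC : ∀ p, |f p| ≤ C) (k : ℕ) :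
    |⨆ y, ⨅ x, birk2 T S f k x y| ≤ C :=
  abs_ciSup_le fun y => abs_iInf_birk2_le hC k y

lemma eventually_forall_exists_birk2_lt_of_delta2_lt (hC : ∀ p, |f p| ≤ C)
    (hc : delta2 T S f < c) : ∀ᶠ k in atTop, ∀ y, ∃ x, birk2 T S f k x y < c := by
  filter_upwards [eventually_lt_of_limsup_lt hc
    (isBoundedUnder_le_of_abs_le fun k => abs_iSup_iInf_birk2_le hC k)] with k hk y
  exact exists_lt_of_ciInf_lt
    ((le_ciSup (bddAbove_range_of_abs_le fun y => abs_iInf_birk2_le hC k y) y).trans_lt hk)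

lemma frequently_exists_forall_lt_birk2_of_lt_delta2 (hC : ∀ p, |f p| ≤ C)
    (hc : c < delta2 T S f) : ∃ᶠ k in atTop, ∃ y, ∀ x, c < birk2 T S f k x y := by
  refine (frequently_lt_of_lt_limsup
    (isCoboundedUnder_le_of_abs_le fun k => abs_iSup_iInf_birk2_le hC k) hc).mono fun k hk => ?_
  obtain ⟨y, hy⟩ := exists_lt_of_lt_ciSup hk
  exact ⟨y, fun x => hy.trans_le
    (ciInf_le (bddBelow_range_of_abs_le fun x => abs_birk2_le hC k x y) x)⟩

end Delta

section Gluing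

variable {X Y : Type*} [MetricSpace X] [CompactSpace X] [Nonempty X]
  [MetricSpace Y] [CompactSpace Y] [Nonempty Y] {f : X × Y → ℝ} {c : ℝ}

/-- At a block length `L` at which some `y₀` beats `c` against every `x`, take `y` tracing the
first `L` steps of `y₀` again and again. -/
lemma SpecProp.exists_eventually_le_birk2_iterate {T : X → X} {S : Y ≃ₜ Y} (hS : SpecProp S)
    (hf : Continuous f) (hc : c < delta2 T S f) :
    ∃ y, ∀ᶠ k in atTop, ∀ i x, c ≤ birk2 T S f k x (S^[i] y) := by
  obtain ⟨C, hC⟩ := exists_abs_le_of_continuous hf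
  obtain ⟨b, hcb, hb⟩ := exists_between hc
  obtain ⟨a, hca, hab⟩ := exists_between hcb
  obtain ⟨η, hη, hshadow⟩ :=
    exists_abs_birkhoffAverage_add_sub_le_of_dist_le (Prod.map T S) hf (sub_pos.2 hab)
  obtain ⟨D, htrace⟩ := hS.exists_tracing_seq hη
  obtain ⟨L, ⟨y₀, hy₀⟩, hL, hL0⟩ :=
    ((frequently_exists_forall_lt_birk2_of_lt_delta2 hC hb).and_eventually
      ((hshadow D).and (eventually_gt_atTop 0))).exists
  obtain ⟨y, hy⟩ := htrace L hL0 fun _ => y₀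
  let E : Set (X × Y) := {p | ∃ m, p.2 = S^[m * (L + D)] y}
  have hreturn : ∀ p ∈ E, ∃ k, 0 < k ∧ k ≤ L + D ∧
      a ≤ birkhoffAverage ℝ (Prod.map T S) f k p ∧ (Prod.map T S)^[k] p ∈ E := by
    rintro ⟨x, _⟩ ⟨m, rfl⟩
    refine ⟨L + D, by omega, le_rfl, ?_, m + 1, ?_⟩
    · have hclose := hL (x, S^[m * (L + D)] y) (x, y₀) fun j hj => by
        simpa [Prod.map_iterate, Prod.dist_eq, hη.le] using hy m j hj
      have hgood : b < birkhoffAverage ℝ (Prod.map T S) f L (x, y₀) := hy₀ x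
      linarith [neg_le_of_abs_le hclose]
    · rw [Prod.map_iterate, Prod.map_snd, ← Function.iterate_add_apply]
      congr 1
      ring
  refine ⟨y, (eventually_le_birkhoffAverage_of_returns hC hca hreturn).mono fun k hk i x =>
    hk (x, S^[i] y) ⟨L + D - i % (L + D), Nat.sub_le _ _, i / (L + D) + 1, ?_⟩⟩
  rw [Prod.map_iterate, Prod.map_snd, ← Function.iterate_add_apply]
  congr 1
  have hlt := Nat.mod_lt i (by omega : L + D > 0)
  have hdiv := Nat.div_add_mod' i (L + D)
  rw [add_mul, one_mul]
  omega

lemma SpecProp.exists_eventually_birk2_le {T : X ≃ₜ X} {S : Y → Y} (hT : SpecProp T)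
    (hf : Continuous f) (hc : delta2 T S f < c) (y : Y) :
    ∃ x, ∀ᶠ k in atTop, birk2 T S f k x y ≤ c := by
  obtain ⟨C, hC⟩ := exists_abs_le_of_continuous hf
  obtain ⟨b, hb, hbc⟩ := exists_between hc
  obtain ⟨a, hba, hac⟩ := exists_between hbc
  obtain ⟨η, hη, hshadow⟩ :=
    exists_abs_birkhoffAverage_add_sub_le_of_dist_le (Prod.map T S) hf (sub_pos.2 hba)
  obtain ⟨D, htrace⟩ := hT.exists_tracing_seq hη
  obtain ⟨L, hgood, hL, hL0⟩ := ((eventually_forall_exists_birk2_lt_of_delta2_lt hC hb).and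
    ((hshadow D).and (eventually_gt_atTop 0))).exists
  choose partner hpartner using hgood
  obtain ⟨x, hx⟩ := htrace L hL0 fun m => partner (S^[m * (L + D)] y)
  let E : Set (X × Y) := Set.range fun m => (T^[m * (L + D)] x, S^[m * (L + D)] y)
  have hreturn : ∀ p ∈ E, ∃ k, 0 < k ∧ k ≤ L + D ∧
      birkhoffAverage ℝ (Prod.map T S) f k p ≤ a ∧ (Prod.map T S)^[k] p ∈ E := by
    rintro _ ⟨m, rfl⟩
    set y' := S^[m * (L + D)] y
    refine ⟨L + D, by omega, le_rfl, ?_, m + 1, ?_⟩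
    · have hclose := hL (T^[m * (L + D)] x, y') (partner y', y') fun j hj => by
        simpa [Prod.map_iterate, Prod.dist_eq, hη.le] using hx m j hj
      have hblock : birkhoffAverage ℝ (Prod.map T S) f L (partner y', y') < b := hpartner y'
      linarith [le_of_abs_le hclose]
    · simp only [Prod.map_iterate, Prod.map_apply, ← Function.iterate_add_apply, add_mul,
        one_mul, add_comm (L + D)]
  exact ⟨x, (eventually_birkhoffAverage_le_of_returns hC hac hreturn).mono fun k hk =>
    hk (x, y) ⟨0, Nat.zero_le _, 0, by simp⟩⟩

lemma SpecProp.exists_isClosed_mapsTo_eventually_le_birk2 {T : X → X} {S : Y ≃ₜ Y}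
    (hS : SpecProp S) (hT : Continuous T) (hf : Continuous f) (hc : c < delta2 T S f) :
    ∃ W : Set Y, IsClosed W ∧ W.Nonempty ∧ Set.MapsTo S W W ∧
      ∀ᶠ k in atTop, ∀ y ∈ W, ∀ x, c ≤ birk2 T S f k x y := by
  obtain ⟨y, hy⟩ := hS.exists_eventually_le_birk2_iterate hf hc
  obtain ⟨N, hN⟩ := eventually_atTop.1 hy
  refine ⟨{y | ∀ k ≥ N, ∀ i x, c ≤ birk2 T S f k x (S^[i] y)}, ?_, ⟨y, hN⟩,
    fun y' hy' k hk i => hy' k hk (i + 1), ?_⟩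
  · simp only [Set.ofPred_forall]
    refine isClosed_iInter fun k => isClosed_iInter fun _ => isClosed_iInter fun i =>
      isClosed_iInter fun x => isClosed_le continuous_const ?_
    exact (continuous_birkhoffAverage_s17 (hT.prodMap S.continuous) hf k).comp
      (continuous_const.prodMk (S.continuous.iterate i))
  · filter_upwards [eventually_ge_atTop N] with k hk y' hy' using hy' k hk 0

end Gluing

section Lifting

variable {X Y : Type*}
  [MetricSpace X] [CompactSpace X] [MeasurableSpace X] [BorelSpace X]
  [MetricSpace Y] [CompactSpace Y] [MeasurableSpace Y] [BorelSpace Y]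
  {T : X → X} {S : Y → Y} {f : X × Y → ℝ} {c : ℝ}

lemma exists_lift_integral_le [Nonempty X] [Nonempty Y] (hT : Continuous T) (hS : Continuous S)
    (hf : Continuous f) (hc : delta2 T S f < c) {ν : ProbabilityMeasure Y} (hν : ν ∈ invMeas S) :
    ∃ lam ∈ invMeas (Prod.map T S), lam.toMeasure.map Prod.snd = ν.toMeasure ∧
      ∫ p, f p ∂lam.toMeasure ≤ c := by
  obtain ⟨C, hC⟩ := exists_abs_le_of_continuous hf
  have hR : Continuous (Prod.map T S) := hT.prodMap hS
  choose s hs hsc using fun k =>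
    exists_measurable_selection_lt (continuous_birkhoffAverage_s17 hR hf k) c
  have hgraph : ∀ k, Measurable fun y => (s k y, y) := fun k => (hs k).prodMk measurable_id
  let m : ℕ → Measure (X × Y) := fun k => ν.toMeasure.map fun y => (s k y, y)
  have hm : ∀ k, IsProbabilityMeasure (m k) := fun k =>
    Measure.isProbabilityMeasure_map (hgraph k).aemeasurable
  have hmarg : ∀ k, (m k).map Prod.snd = ν.toMeasure := fun k => by
    rw [Measure.map_map measurable_snd (hgraph k)]
    exact Measure.map_id
  obtain ⟨lam, hlam, φ, hφ, hlim⟩ := exists_mem_invMeas_tendsto hR m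
  refine ⟨lam, hlam, map_eq_of_tendsto_of_semiconj hS continuous_snd (fun _ => rfl) hν
    (fun n => hmarg (φ n)) hφ.tendsto_atTop hlim, le_of_tendsto (hlim f hf) ?_⟩
  filter_upwards [hφ.tendsto_atTop.eventually
    (eventually_forall_exists_birk2_lt_of_delta2_lt hC hc)] with n hn
  have hcont := continuous_birkhoffAverage_s17 hR hf (φ n)
  rw [integral_map (hgraph _).aemeasurable hcont.aestronglyMeasurable]
  refine (integral_mono (Integrable.of_bound
    (hcont.measurable.comp (hgraph _)).aestronglyMeasurable C (Eventually.of_forall fun y =>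
      abs_birkhoffAverage_le_s17 hC (φ n) _)) (integrable_const c)
    fun y => (hsc (φ n) y (hn y)).le).trans_eq ?_
  simp

lemma le_integral_of_eventually_le_birk2 (hT : Continuous T) (hS : Continuous S)
    (hf : Continuous f) {W : Set Y} (hW : ∀ᶠ k in atTop, ∀ y ∈ W, ∀ x, c ≤ birk2 T S f k x y)
    {lam : ProbabilityMeasure (X × Y)} (hlam : lam ∈ invMeas (Prod.map T S))
    (hlamW : ∀ᵐ p ∂lam.toMeasure, p.2 ∈ W) : c ≤ ∫ p, f p ∂lam.toMeasure := by
  have hR : Continuous (Prod.map T S) := hT.prodMap hS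
  obtain ⟨k, hk, hk0⟩ := (hW.and (eventually_gt_atTop 0)).exists
  rw [← integral_birkhoffAverage_of_mem_invMeas hR hlam hf hk0]
  calc c = ∫ _, c ∂lam.toMeasure := by simp
    _ ≤ ∫ p, birkhoffAverage ℝ (Prod.map T S) f k p ∂lam.toMeasure :=
      integral_mono_ae (integrable_const c)
        (integrable_of_continuous (continuous_birkhoffAverage_s17 hR hf k) _)
        (hlamW.mono fun p hp => hk p.2 hp p.1)

end Lifting

section Comparison

variable {X Y : Type*} [MetricSpace X] [CompactSpace X] [Nonempty X]
  [MetricSpace Y] [CompactSpace Y] [Nonempty Y] {f : X × Y → ℝ}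

lemma gamma2_le_delta2 {T : X ≃ₜ X} {S : Y → Y} (hf : Continuous f) (hT : SpecProp T) :
    gamma2 T S f ≤ delta2 T S f := by
  obtain ⟨C, hC⟩ := exists_abs_le_of_continuous hf
  refine le_of_forall_gt_imp_ge_of_dense fun c hc => ciSup_le fun y => ?_
  obtain ⟨x, hx⟩ := hT.exists_eventually_birk2_le hf hc y
  exact ciInf_le_of_le (bddBelow_range_of_abs_le fun x => abs_limsup_birk2_le hC x y) x
    (limsup_le_of_le (isCoboundedUnder_le_of_abs_le fun k => abs_birk2_le hC k x y) hx)

lemma delta2_le_gamma2 {T : X → X} {S : Y ≃ₜ Y} (hf : Continuous f) (hS : SpecProp S) :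
    delta2 T S f ≤ gamma2 T S f := by
  obtain ⟨C, hC⟩ := exists_abs_le_of_continuous hf
  refine le_of_forall_lt_imp_le_of_dense fun c hc => ?_
  obtain ⟨y, hy⟩ := hS.exists_eventually_le_birk2_iterate hf hc
  refine le_ciSup_of_le (bddAbove_range_of_abs_le fun y =>
    abs_ciInf_le fun x => abs_limsup_birk2_le hC x y) y (le_ciInf fun x => ?_)
  exact le_limsup_of_frequently_le (hy.mono fun k hk => hk 0 x).frequently
    (isBoundedUnder_le_of_abs_le fun k => abs_birk2_le hC k x y)

lemma delta2_le_beta2 {T : X → X} {S : Y ≃ₜ Y} (hT : Continuous T) (hf : Continuous f)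
    (hS : SpecProp S) : delta2 T S f ≤ beta2 T S f := by
  obtain ⟨C, hC⟩ := exists_abs_le_of_continuous hf
  have hbdd : ∀ y, BddBelow {L | ∃ x, (x, y) ∈ reg2 T S f ∧
      Tendsto (fun k => birk2 T S f k x y) atTop (𝓝 L)} := fun y =>
    ⟨-C, fun L ⟨x, _, hL⟩ => ge_of_tendsto' hL fun k => neg_le_of_abs_le (abs_birk2_le hC k x y)⟩
  refine le_of_forall_lt_imp_le_of_dense fun c hc => ?_
  obtain ⟨W, hWclosed, ⟨w, hw⟩, hSW, hcW⟩ :=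
    hS.exists_isClosed_mapsTo_eventually_le_birk2 hT hf hc
  obtain ⟨⟨x, y⟩, ⟨-, hyW⟩, L, hL⟩ := exists_tendsto_birkhoffAverage
    (hT.prodMap S.continuous) hf (isClosed_univ.prod hWclosed)
    ⟨(Classical.arbitrary X, w), trivial, hw⟩ ((Set.mapsTo_univ T _).prodMap hSW)
  refine le_csSup_of_le ⟨C, ?_⟩ ⟨y, ⟨x, L, hL⟩, rfl⟩ (le_csInf ⟨L, x, ⟨L, hL⟩, hL⟩ ?_)
  · rintro _ ⟨y', ⟨x', L', hL'⟩, rfl⟩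
    exact csInf_le_of_le (hbdd y') ⟨x', ⟨L', hL'⟩, hL'⟩
      (le_of_tendsto' hL' fun k => le_of_abs_le (abs_birk2_le hC k x' y'))
  · rintro L' ⟨x', -, hL'⟩
    exact ge_of_tendsto hL' (hcW.mono fun k hk => hk y hyW x')

variable [MeasurableSpace X] [BorelSpace X] [MeasurableSpace Y] [BorelSpace Y]

lemma psi2_le_delta2 {T : X → X} {S : Y → Y} (hT : Continuous T) (hS : Continuous S)
    (hf : Continuous f) {ν : ProbabilityMeasure Y} (hν : ν ∈ invMeas S) :
    psi2 T S f ν ≤ delta2 T S f := by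
  obtain ⟨C, hC⟩ := exists_abs_le_of_continuous hf
  refine le_of_forall_gt_imp_ge_of_dense fun c hc => ?_
  obtain ⟨lam, hlam, hmarg, hle⟩ := exists_lift_integral_le hT hS hf hc hν
  refine csInf_le_of_le ⟨-C, ?_⟩ ⟨lam, hlam, hmarg, rfl⟩ hle
  rintro _ ⟨lam', -, -, rfl⟩
  have hnorm :=
    norm_integral_le_of_norm_le_const (μ := lam'.toMeasure) (f := f) (Eventually.of_forall hC)
  rw [probReal_univ, mul_one] at hnorm
  exact neg_le_of_abs_le hnorm

lemma alpha2_le_delta2 {T : X → X} {S : Y → Y} (hT : Continuous T) (hS : Continuous S)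
    (hf : Continuous f) : alpha2 T S f ≤ delta2 T S f := by
  obtain ⟨ν, hν, -⟩ := exists_mem_invMeas_ae_mem hS isClosed_univ Set.univ_nonempty
    (Set.mapsTo_univ S _)
  refine csSup_le ⟨_, ν, hν, rfl⟩ ?_
  rintro _ ⟨ν', hν', rfl⟩
  exact psi2_le_delta2 hT hS hf hν'

lemma delta2_le_alpha2 {T : X → X} {S : Y ≃ₜ Y} (hT : Continuous T) (hf : Continuous f)
    (hS : SpecProp S) : delta2 T S f ≤ alpha2 T S f := by
  refine le_of_forall_lt_imp_le_of_dense fun c hc => ?_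
  obtain ⟨W, hWclosed, hWne, hSW, hcW⟩ :=
    hS.exists_isClosed_mapsTo_eventually_le_birk2 hT hf hc
  obtain ⟨ν, hν, hνW⟩ := exists_mem_invMeas_ae_mem S.continuous hWclosed hWne hSW
  refine le_csSup_of_le ⟨delta2 T S f, ?_⟩ ⟨ν, hν, rfl⟩ (le_csInf ?_ ?_)
  · rintro _ ⟨ν', hν', rfl⟩
    exact psi2_le_delta2 hT S.continuous hf hν'
  · obtain ⟨lam, hlam, hmarg, -⟩ :=
      exists_lift_integral_le hT S.continuous hf (lt_add_one (delta2 T S f)) hν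
    exact ⟨_, lam, hlam, hmarg, rfl⟩
  · rintro _ ⟨lam, hlam, hmarg, rfl⟩
    exact le_integral_of_eventually_le_birk2 hT S.continuous hf hcW hlam
      (ae_of_ae_map measurable_snd.aemeasurable (hmarg.symm ▸ hνW))

end Comparison

theorem stmt17_general
    {X Y : Type*}
    [MetricSpace X] [CompactSpace X] [Nonempty X] [MeasurableSpace X] [BorelSpace X]
    [MetricSpace Y] [CompactSpace Y] [Nonempty Y] [MeasurableSpace Y] [BorelSpace Y]
    (T : X ≃ₜ X) (S : Y ≃ₜ Y) (f : X × Y → ℝ) (hf : Continuous f)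
    (hspecX : SpecProp T) (hspecY : SpecProp S) :
    alpha2 (⇑T) (⇑S) f = gamma2 (⇑T) (⇑S) f ∧
    gamma2 (⇑T) (⇑S) f = delta2 (⇑T) (⇑S) f ∧
    delta2 (⇑T) (⇑S) f ≤ beta2 (⇑T) (⇑S) f := by
  have hαδ : alpha2 T S f = delta2 T S f :=
    (alpha2_le_delta2 T.continuous S.continuous hf).antisymm
      (delta2_le_alpha2 T.continuous hf hspecY)
  have hγδ : gamma2 T S f = delta2 T S f :=
    (gamma2_le_delta2 hf hspecX).antisymm (delta2_le_gamma2 hf hspecY)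
  exact ⟨hαδ.trans hγδ.symm, hγδ, delta2_le_beta2 T.continuous hf hspecY⟩

/-- if `(X, T)` and `(Y, S)` both have the periodic specification
property, then `α(f) = γ(f) = δ(f) ≤ β(f)`. -/
theorem stmt17
    {X Y : Type*}
    [MetricSpace X] [CompactSpace X] [Nonempty X] [MeasurableSpace X] [BorelSpace X]
    [MetricSpace Y] [CompactSpace Y] [Nonempty Y] [MeasurableSpace Y] [BorelSpace Y]
    (T : X ≃ₜ X) (S : Y ≃ₜ Y) (f : X × Y → ℝ) (hf : Continuous f)
    (hspecX : PerSpecProp T) (hspecY : PerSpecProp S) :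
    alpha2 (⇑T) (⇑S) f = gamma2 (⇑T) (⇑S) f ∧
    gamma2 (⇑T) (⇑S) f = delta2 (⇑T) (⇑S) f ∧
    delta2 (⇑T) (⇑S) f ≤ beta2 (⇑T) (⇑S) f :=
  stmt17_general T S f hf hspecX.specProp hspecY.specProp
end
end
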